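/- arXiv:2602.06361 — 6 statements merged into one kernel-verified Lean document; each statement's English description precedes it below -/
import Mathlib

section
/- Let μ^a, μ^b ∈ [0,1]^m with OptEnvy ≤ −Δ for some Δ > 0, and let q ≥ 1 satisfy q ≤ (1/2) m³/Δ². In the thresholding allocation model (with estimate variance m/q), for every c > 0 the expectation of f(c) satisfies E[f(c)] ≤ −(1/5) · m^{−3/2} · q^{1/2} · Δ². -/
open MeasureTheory ProbabilityTheory Real Filter
open scoped ENNReal NNReal Classical

noncomputable section

def envyAB {m : ℕ} (μa : Fin m → ℝ) (A : Finset (Fin m)) : ℝ :=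
  ∑ i ∈ Aᶜ, μa i - ∑ i ∈ A, μa i

def envyBA {m : ℕ} (μb : Fin m → ℝ) (A : Finset (Fin m)) : ℝ :=
  ∑ i ∈ A, μb i - ∑ i ∈ Aᶜ, μb i

def envy {m : ℕ} (μa μb : Fin m → ℝ) (A : Finset (Fin m)) : ℝ :=
  max (envyAB μa A) (envyBA μb A)

def optEnvy {m : ℕ} (μa μb : Fin m → ℝ) : ℝ :=
  ⨅ A : Finset (Fin m), envy μa μb A

/-- The joint law of the `2m` independent Gaussian estimates in the thresholding allocation
model: `ω (i, true) = v^a_i ~ N(μ^a_i, m/q)` and `ω (i, false) = v^b_i ~ N(μ^b_i, m/q)`. -/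
def threshMeasure (m q : ℕ) (μa μb : Fin m → ℝ) : Measure ((Fin m × Bool) → ℝ) :=
  Measure.pi fun p => gaussianReal (if p.2 then μa p.1 else μb p.1) ((m : ℝ≥0) / (q : ℝ≥0))

/-- `x_i(c) = 1` if `c v^a_i − v^b_i > 0` and `x_i(c) = −1` otherwise. -/
def xSign {m : ℕ} (c : ℝ) (ω : (Fin m × Bool) → ℝ) (i : Fin m) : ℝ :=
  if 0 < c * ω (i, true) - ω (i, false) then 1 else -1

/-- `e_a(c) = −∑ i x_i(c) μ^a_i`. -/
def eA {m : ℕ} (μa : Fin m → ℝ) (c : ℝ) (ω : (Fin m × Bool) → ℝ) : ℝ :=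
  -∑ i, xSign c ω i * μa i

/-- `e_b(c) = ∑ i x_i(c) μ^b_i`. -/
def eB {m : ℕ} (μb : Fin m → ℝ) (c : ℝ) (ω : (Fin m × Bool) → ℝ) : ℝ :=
  ∑ i, xSign c ω i * μb i

/-- `f(c) = (c e_a(c) + e_b(c))/(1+c)`. -/
def fFun {m : ℕ} (μa μb : Fin m → ℝ) (c : ℝ) (ω : (Fin m × Bool) → ℝ) : ℝ :=
  (c * eA μa c ω + eB μb c ω) / (1 + c)

/-- `e'_a(c) = −∑ i x_i(c) v^a_i`. -/
def eA' {m : ℕ} (c : ℝ) (ω : (Fin m × Bool) → ℝ) : ℝ :=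
  -∑ i, xSign c ω i * ω (i, true)

/-- `e'_b(c) = ∑ i x_i(c) v^b_i`. -/
def eB' {m : ℕ} (c : ℝ) (ω : (Fin m × Bool) → ℝ) : ℝ :=
  ∑ i, xSign c ω i * ω (i, false)

/-- The law of `c v^a_i - v^b_i`. -/
lemma law_diff {m : ℕ} (μa μb : Fin m → ℝ) (q : ℕ) (c : ℝ) (i : Fin m) :
    (threshMeasure m q μa μb).map (fun ω => c * ω (i, true) - ω (i, false)) =
      gaussianReal (c * μa i - μb i)
        (NNReal.mk (c ^ 2) (sq_nonneg c) * ((m : ℝ≥0) / (q : ℝ≥0)) + (m : ℝ≥0) / (q : ℝ≥0)) := by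
  have hev : ∀ p : Fin m × Bool, (threshMeasure m q μa μb).map (fun ω => ω p) =
      gaussianReal (if p.2 then μa p.1 else μb p.1) ((m : ℝ≥0) / (q : ℝ≥0)) := fun p =>
    (measurePreserving_eval (μ := fun p : Fin m × Bool =>
      gaussianReal (if p.2 then μa p.1 else μb p.1) ((m : ℝ≥0) / (q : ℝ≥0))) p).map_eq
  have hind : iIndepFun (fun (p : Fin m × Bool) (ω : Fin m × Bool → ℝ) => ω p)
      (threshMeasure m q μa μb) :=
    iIndepFun_pi (X := fun _ x => x) (fun _ => aemeasurable_id)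
  have h2 := hind.indepFun (i := (i, true)) (j := (i, false)) (by simp)
  have h3 : IndepFun (fun ω : Fin m × Bool → ℝ => c * ω (i, true))
      (fun ω : Fin m × Bool → ℝ => - ω (i, false)) (threshMeasure m q μa μb) :=
    h2.comp (φ := fun x => c * x) (ψ := fun x => -x) (by fun_prop) (by fun_prop)
  have hA : (threshMeasure m q μa μb).map (fun ω => c * ω (i, true)) =
      gaussianReal (c * μa i) (NNReal.mk (c ^ 2) (sq_nonneg c) * ((m : ℝ≥0) / (q : ℝ≥0))) := by
    have := gaussianReal_map_const_mul (μ := μa i) (v := (m : ℝ≥0) / (q : ℝ≥0)) c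
    have e := hev (i, true)
    simp only [if_true] at e
    rw [← e, Measure.map_map (by fun_prop) (by fun_prop)] at this
    exact this
  have hB : (threshMeasure m q μa μb).map (fun ω => - ω (i, false)) =
      gaussianReal (- μb i) ((m : ℝ≥0) / (q : ℝ≥0)) := by
    have := gaussianReal_map_neg (μ := μb i) (v := (m : ℝ≥0) / (q : ℝ≥0))
    have e := hev (i, false)
    simp only [Bool.false_eq_true, if_false] at e
    rw [← e, Measure.map_map (by fun_prop) (by fun_prop)] at this
    exact this
  have := gaussianReal_add_gaussianReal_of_indepFun h3 hA hB
  rw [← sub_eq_add_neg] at this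
  rw [← this]
  congr 1

lemma std_sym (t : ℝ) : (gaussianReal 0 1).real (Set.Iic (-t)) = (gaussianReal 0 1).real (Set.Ici t) := by
  have h := gaussianReal_map_neg (μ := 0) (v := 1)
  rw [neg_zero] at h
  conv_lhs => rw [← h]
  rw [map_measureReal_apply (by fun_prop) measurableSet_Iic]
  congr 1
  ext x
  simp

lemma std_add (t : ℝ) : (gaussianReal 0 1).real (Set.Ioi t) + (gaussianReal 0 1).real (Set.Iic t) = 1 := by
  have h := measureReal_add_measureReal_compl (μ := gaussianReal 0 1) (s := Set.Iic t) measurableSet_Iic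
  rw [Set.compl_Iic] at h
  simp at h
  linarith

lemma std_Ici (t : ℝ) : (gaussianReal 0 1).real (Set.Ici t) = (gaussianReal 0 1).real (Set.Ioi t) := by
  have := nullSingletonClass_gaussianReal (μ := 0) (v := 1) one_ne_zero
  exact measureReal_congr Ioi_ae_eq_Ici.symm

lemma std_Ioo (t : ℝ) (h0 : 0 ≤ t) (h1 : t ≤ √2) :
    1 / 5 * t ≤ (gaussianReal 0 1).real (Set.Ioo (-t) t) := by
  rw [Measure.real, gaussianReal_apply_eq_integral _ one_ne_zero, ENNReal.toReal_ofReal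
    (integral_nonneg (gaussianPDFReal_nonneg _ _))]
  have hk : ∀ x ∈ Set.Ioo (-t) t, (1 / 10 : ℝ) ≤ gaussianPDFReal 0 1 x := by
    intro x hx
    have hx2 : x ^ 2 ≤ 2 := by
      have : x ^ 2 ≤ (√2) ^ 2 := sq_le_sq' (by linarith [hx.1]) (by linarith [hx.2])
      rwa [Real.sq_sqrt (by norm_num)] at this
    rw [gaussianPDFReal]
    simp only [NNReal.coe_one, sub_zero, mul_one]
    have h3 : √(2 * π) ≤ 3 := by
      rw [Real.sqrt_le_left (by norm_num)]
      linarith [Real.pi_lt_four]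
    have hp : 0 < √(2 * π) := by positivity
    have e1 : (1 / 3 : ℝ) ≤ (√(2 * π))⁻¹ := by
      rw [one_div]; exact inv_anti₀ hp h3
    have e2 : (3 / 10 : ℝ) ≤ rexp (-x ^ 2 / 2) := by
      have a : rexp (-1) ≤ rexp (-x ^ 2 / 2) := Real.exp_le_exp.2 (by linarith)
      have b : (0.36 : ℝ) < rexp (-1) := by
        have := Real.exp_neg_one_gt_d9
        linarith
      linarith
    nlinarith
  have := setIntegral_mono_on (μ := volume) (s := Set.Ioo (-t) t) (f := fun _ => (1 / 10 : ℝ))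
    (g := gaussianPDFReal 0 1) (by simp) (integrable_gaussianPDFReal _ _).integrableOn
    measurableSet_Ioo hk
  simp only [setIntegral_const, smul_eq_mul, Real.volume_real_Ioo_of_le (by linarith : -t ≤ t)] at this
  linarith

/-- `G t = P(Z > -t) - P(Z ≤ -t)` lower bound. -/
lemma std_G (t : ℝ) (h0 : 0 ≤ t) :
    1 / 5 * min t (√2) ≤ 2 * (gaussianReal 0 1).real (Set.Ioi (-t)) - 1 := by
  have h1 := std_Ioo (min t (√2)) (le_min h0 (by positivity)) (min_le_right _ _)
  have h2 : (gaussianReal 0 1).real (Set.Ioo (-min t (√2)) (min t (√2))) ≤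
      (gaussianReal 0 1).real (Set.Ioo (-t) t) :=
    measureReal_mono (Set.Ioo_subset_Ioo (by simp) (by simp))
  have h3 : (gaussianReal 0 1).real (Set.Ioo (-t) t ∪ Set.Ici t) ≤
      (gaussianReal 0 1).real (Set.Ioi (-t)) := by
    rw [← std_Ici (-t)]
    refine measureReal_mono ?_
    rintro x (hx | hx)
    · exact hx.1.le
    · simp only [Set.mem_Ici] at *; linarith
  rw [measureReal_union (by
    rw [Set.disjoint_left]; rintro x hx hy; exact absurd hx.2 (not_lt.2 hy)) measurableSet_Ici] at h3
  have h4 := std_sym t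
  have h5 := std_add (-t)
  linarith

lemma std_mul (t : ℝ) :
    1 / 5 * (|t| * min |t| (√2)) ≤ t * (2 * (gaussianReal 0 1).real (Set.Ioi (-t)) - 1) := by
  rcases le_total 0 t with h | h
  · rw [abs_of_nonneg h]
    nlinarith [mul_le_mul_of_nonneg_left (std_G t h) h]
  · rw [abs_of_nonpos h]
    have h1 := mul_le_mul_of_nonneg_left (std_G (-t) (by linarith)) (neg_nonneg.2 h)
    have h2 : (gaussianReal 0 1).real (Set.Ioi (-t)) + (gaussianReal 0 1).real (Set.Ioi (- -t)) = 1 := by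
      rw [neg_neg, ← std_add t, ← std_Ici (-t), ← std_sym (-t), neg_neg]
      ring
    have h3 : (gaussianReal 0 1).real (Set.Ioi (-t)) = 1 - (gaussianReal 0 1).real (Set.Ioi (- -t)) := by
      linarith
    rw [h3]
    linarith

lemma gauss_Ioi (d s : ℝ) (hs : 0 < s) (v : ℝ≥0) (hv : (v : ℝ) = s ^ 2) :
    (gaussianReal d v).real (Set.Ioi 0) = (gaussianReal 0 1).real (Set.Ioi (-(d / s))) := by
  have h1 : (gaussianReal 0 1).map (fun x => d + s * x) = gaussianReal d v := by
    have a := gaussianReal_map_const_mul (μ := 0) (v := 1) s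
    have b := gaussianReal_map_const_add (μ := s * 0)
      (v := NNReal.mk (s ^ 2) (sq_nonneg s) * 1) d
    have hv' : NNReal.mk (s ^ 2) (sq_nonneg s) * 1 = v := by
      apply NNReal.eq; rw [mul_one, hv]; rfl
    rw [← a, Measure.map_map (by fun_prop) (by fun_prop)] at b
    rw [hv', mul_zero, zero_add] at b
    exact b
  rw [← h1, map_measureReal_apply (by fun_prop) measurableSet_Ioi]
  congr 1
  ext x
  simp only [Set.mem_preimage, Set.mem_Ioi]
  rw [← neg_div, div_lt_iff₀ hs]
  constructor <;> intro h <;> linarith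

lemma measurable_xSign {m : ℕ} (c : ℝ) (i : Fin m) : Measurable (fun ω => xSign c ω i) := by
  unfold xSign
  exact Measurable.ite (measurableSet_lt measurable_const (by fun_prop)) measurable_const measurable_const

instance {m q : ℕ} (μa μb : Fin m → ℝ) : IsProbabilityMeasure (threshMeasure m q μa μb) := by
  unfold threshMeasure; infer_instance

lemma integrable_xSign {m q : ℕ} (μa μb : Fin m → ℝ) (c : ℝ) (i : Fin m) :
    Integrable (fun ω => xSign c ω i) (threshMeasure m q μa μb) := by
  refine Integrable.of_bound (measurable_xSign c i).aestronglyMeasurable 1 (ae_of_all _ fun ω => ?_)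
  unfold xSign
  split_ifs <;> simp

lemma integral_xSign {m q : ℕ} (hm : 0 < m) (hq : 0 < q) (μa μb : Fin m → ℝ) (c : ℝ) (i : Fin m) :
    ∫ ω, xSign c ω i ∂(threshMeasure m q μa μb) =
      2 * (gaussianReal 0 1).real
        (Set.Ioi (-((c * μa i - μb i) / (√(m / q) * √(1 + c ^ 2))))) - 1 := by
  have hs : 0 < √((m : ℝ) / q) * √(1 + c ^ 2) := by positivity
  rw [← gauss_Ioi _ _ hs (NNReal.mk (c ^ 2) (sq_nonneg c) * ((m : ℝ≥0) / (q : ℝ≥0)) + (m : ℝ≥0) / (q : ℝ≥0))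
    (by
      rw [mul_pow, Real.sq_sqrt (by positivity), Real.sq_sqrt (by positivity)]
      push_cast
      ring), ← law_diff μa μb q c i, map_measureReal_apply (by fun_prop) measurableSet_Ioi]
  set S := (fun ω : Fin m × Bool → ℝ => c * ω (i, true) - ω (i, false)) ⁻¹' Set.Ioi 0 with hS
  have hSm : MeasurableSet S := measurableSet_Ioi.preimage (by fun_prop)
  have e : (fun ω => xSign c ω i) = fun ω => 2 * S.indicator (fun _ => (1 : ℝ)) ω - 1 := by
    funext ω
    unfold xSign
    by_cases h : 0 < c * ω (i, true) - ω (i, false)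
    · rw [if_pos h, Set.indicator_of_mem (by exact h)]; norm_num
    · rw [if_neg h, Set.indicator_of_notMem (by exact h)]; norm_num
  rw [e, integral_sub (((integrable_const (1 : ℝ)).indicator hSm).const_mul 2) (integrable_const _),
    integral_const_mul, integral_indicator_const _ hSm]
  simp

lemma sum_abs_ge {m : ℕ} (μa μb : Fin m → ℝ) (Δ : ℝ) (hopt : optEnvy μa μb ≤ -Δ) (c : ℝ)
    (hc : 0 < c) : (1 + c) * Δ ≤ ∑ i, |c * μa i - μb i| := by
  obtain ⟨A, hA⟩ := exists_eq_ciInf_of_finite (f := fun A : Finset (Fin m) => envy μa μb A)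
  have hA' : envy μa μb A ≤ -Δ := by
    rw [hA]; exact hopt
  have h1 : envyAB μa A ≤ -Δ := (le_max_left _ _).trans hA'
  have h2 : envyBA μb A ≤ -Δ := (le_max_right _ _).trans hA'
  unfold envyAB at h1
  unfold envyBA at h2
  have h3 : ∑ i ∈ A, (c * μa i - μb i) ≤ ∑ i ∈ A, |c * μa i - μb i| :=
    Finset.sum_le_sum fun i _ => le_abs_self _
  have h4 : ∑ i ∈ Aᶜ, -(c * μa i - μb i) ≤ ∑ i ∈ Aᶜ, |c * μa i - μb i| :=
    Finset.sum_le_sum fun i _ => neg_le_abs _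
  rw [← Finset.sum_add_sum_compl A]
  simp only [Finset.sum_neg_distrib, Finset.sum_sub_distrib, ← Finset.mul_sum] at h3 h4
  nlinarith [mul_le_mul_of_nonneg_left h1 hc.le]

/-- in the thresholding allocation model, if `OptEnvy ≤ -Δ` and
`q ≤ (1/2) m³/Δ²`, then `E[f(c)] ≤ −(1/5) m^{−3/2} q^{1/2} Δ²` for every `c > 0`. -/
theorem stmt9 {m : ℕ} (μa μb : Fin m → ℝ)
    (hμa : ∀ i, μa i ∈ Set.Icc (0 : ℝ) 1) (hμb : ∀ i, μb i ∈ Set.Icc (0 : ℝ) 1)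
    (Δ : ℝ) (hΔ : 0 < Δ) (hopt : optEnvy μa μb ≤ -Δ)
    (q : ℕ) (hq1 : 1 ≤ q) (hq2 : (q : ℝ) ≤ 1 / 2 * m ^ 3 / Δ ^ 2)
    (c : ℝ) (hc : 0 < c) :
    ∫ ω, fFun μa μb c ω ∂(threshMeasure m q μa μb) ≤
      -(1 / 5) * (m : ℝ) ^ (-(3 : ℝ) / 2) * (q : ℝ) ^ ((1 : ℝ) / 2) * Δ ^ 2 := by
  have hq0 : 0 < q := hq1
  have hm : 0 < m := by
    rcases Nat.eq_zero_or_pos m with h | h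
    · subst h
      have : (1 : ℝ) ≤ q := by exact_mod_cast hq1
      norm_num at hq2
      linarith
    · exact h
  have hmR : (0 : ℝ) < m := by exact_mod_cast hm
  have hqR : (0 : ℝ) < q := by exact_mod_cast hq0
  set σ : ℝ := √((m : ℝ) / q) with hσ
  have hσ0 : 0 < σ := by positivity
  have hσ2 : σ ^ 2 = m / q := Real.sq_sqrt (by positivity)
  set s : ℝ := σ * √(1 + c ^ 2) with hs
  have hs0 : 0 < s := by positivity
  have hsle : s ≤ σ * (1 + c) := by
    apply mul_le_mul_of_nonneg_left _ hσ0.le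
    rw [Real.sqrt_le_left (by linarith)]
    nlinarith
  set D : ℝ := Δ / m with hD
  have hD0 : 0 < D := by positivity
  have hDσ : 2 * D ≤ √2 * σ := by
    refine (pow_le_pow_iff_left₀ (by positivity) (by positivity) two_ne_zero).1 ?_
    rw [mul_pow, mul_pow, Real.sq_sqrt (by norm_num), hσ2, hD, div_pow]
    rw [le_div_iff₀ (by positivity)] at hq2
    rw [← mul_div_assoc, ← mul_div_assoc, div_le_div_iff₀ (by positivity) hqR]
    nlinarith
  set d : Fin m → ℝ := fun i => c * μa i - μb i with hd
  -- the expectation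
  have hE : ∫ ω, fFun μa μb c ω ∂(threshMeasure m q μa μb) =
      -(∑ i, d i * (2 * (gaussianReal 0 1).real (Set.Ioi (-(d i / s))) - 1)) / (1 + c) := by
    have e : (fun ω => fFun μa μb c ω) = fun ω => -(∑ i, d i * xSign c ω i) / (1 + c) := by
      funext ω
      unfold fFun eA eB
      congr 1
      rw [mul_neg, Finset.mul_sum, neg_add_eq_sub, ← Finset.sum_sub_distrib, ← Finset.sum_neg_distrib]
      refine Finset.sum_congr rfl fun i _ => ?_
      simp only [hd]; ring
    rw [e, integral_div, integral_neg,
      integral_finsetSum _ (fun i _ => (integrable_xSign μa μb c i).const_mul _)]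
    simp only [integral_const_mul, integral_xSign hm hq0, hd, hs, hσ]
  have hterm : ∀ i, 1 / 5 * ((2 * D * (|d i| / (1 + c)) - D ^ 2) / σ) ≤
      d i * (2 * (gaussianReal 0 1).real (Set.Ioi (-(d i / s))) - 1) / (1 + c) := by
    intro i
    have h1 := mul_le_mul_of_nonneg_left (std_mul (d i / s)) (by positivity : 0 ≤ s / (1 + c))
    rw [abs_div, abs_of_pos hs0] at h1
    set G := 2 * (gaussianReal 0 1).real (Set.Ioi (-(d i / s))) - 1
    have e1 : s / (1 + c) * (d i / s * G) = d i * G / (1 + c) := by field_simp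
    have e2 : s / (1 + c) * (1 / 5 * (|d i| / s * min (|d i| / s) (√2))) =
        1 / 5 * ((|d i| / (1 + c)) * min (|d i| / s) (√2)) := by field_simp
    rw [e1, e2] at h1
    refine le_trans ?_ h1
    apply mul_le_mul_of_nonneg_left _ (by norm_num)
    set u := |d i| / (1 + c) with hu
    have hu0 : 0 ≤ u := by positivity
    have hus : u / σ ≤ |d i| / s := by
      rw [hu, div_div]
      apply div_le_div_of_nonneg_left (abs_nonneg _) hs0
      linarith
    rw [div_le_iff₀ hσ0]
    rcases le_total (|d i| / s) (√2) with h | h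
    · rw [min_eq_left h]
      have h5 : u ≤ |d i| / s * σ := (div_le_iff₀ hσ0).1 hus
      nlinarith [mul_le_mul_of_nonneg_left h5 hu0, sq_nonneg (u - D)]
    · rw [min_eq_right h]
      nlinarith [mul_le_mul_of_nonneg_left hDσ hu0, sq_nonneg D]
  have hsum := Finset.sum_le_sum fun i (_ : i ∈ Finset.univ) => hterm i
  rw [← Finset.sum_div, ← Finset.mul_sum, ← Finset.sum_div, Finset.sum_sub_distrib,
    ← Finset.mul_sum, ← Finset.sum_div] at hsum
  simp only [Finset.sum_const, Finset.card_univ, Fintype.card_fin, nsmul_eq_mul] at hsum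
  have habs : Δ ≤ (∑ i, |d i|) / (1 + c) := by
    rw [le_div_iff₀ (by linarith)]
    linarith [sum_abs_ge μa μb Δ hopt c hc]
  have hfin : Δ ^ 2 / (m * σ) ≤ (2 * D * ((∑ i, |d i|) / (1 + c)) - m * D ^ 2) / σ := by
    have e : Δ ^ 2 / (m * σ) = (2 * D * Δ - m * D ^ 2) / σ := by
      rw [hD]; field_simp; ring
    rw [e]
    apply div_le_div_of_nonneg_right _ hσ0.le
    nlinarith [mul_le_mul_of_nonneg_left habs hD0.le]
  have hR : (m : ℝ) ^ (-(3 : ℝ) / 2) * (q : ℝ) ^ ((1 : ℝ) / 2) = 1 / (m * σ) := by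
    rw [hσ, Real.sqrt_div hmR.le, Real.sqrt_eq_rpow, Real.sqrt_eq_rpow]
    have : (m : ℝ) ^ (-(3 : ℝ) / 2) = 1 / (m * (m : ℝ) ^ ((1 : ℝ) / 2)) := by
      rw [show -(3 : ℝ) / 2 = -(1 + 1 / 2) by norm_num, Real.rpow_neg hmR.le, Real.rpow_add hmR,
        Real.rpow_one, one_div, one_div]
    rw [this]
    field_simp
  rw [hE, neg_div, mul_assoc (-(1 / 5) : ℝ), hR]
  have : -(1 / 5) * (1 / (m * σ)) * Δ ^ 2 = - (1 / 5 * (Δ ^ 2 / (m * σ))) := by ring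
  rw [this]
  linarith
end
end

section
/- Let μ^a, μ^b ∈ [0,1]^m with OptEnvy ≤ −Δ for some Δ > 0, and let q ≥ 1 satisfy q ≤ (1/2) m³/Δ² and q ≤ m²/(log m)². In the thresholding allocation model (with estimate variance m/q), for every fixed c > 0: P[ f(c) > −(1/5) m^{−3/2} q^{1/2} Δ² + (m/√q)·log m ] ≤ 2 exp(−(3/10)(log m)²). -/
open MeasureTheory ProbabilityTheory Real Filter
open scoped ENNReal NNReal Classical

noncomputable section

lemma gpdf (x : ℝ) : gaussianPDFReal 0 1 x = (√(2 * π))⁻¹ * exp (-x^2/2) := by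
  simp [gaussianPDFReal]

lemma gapply (s : Set ℝ) : (gaussianReal 0 1).real s = ∫ x in s, gaussianPDFReal 0 1 x := by
  rw [Measure.real, gaussianReal_apply_eq_integral 0 one_ne_zero, ENNReal.toReal_ofReal]
  exact integral_nonneg (fun x => gaussianPDFReal_nonneg _ _ _)

lemma G1 (U : ℝ) (hU : 0 ≤ U) : U^2 * (gaussianReal 0 1).real (Set.Ici U) ≤ 1/4 := by
  have hIntg : Integrable (fun x => x * gaussianPDFReal 0 1 x) := by
    have := (integrable_mul_exp_neg_mul_sq (b := 1/2) (by norm_num)).const_mul (√(2 * π))⁻¹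
    refine this.congr (ae_of_all _ fun x => ?_)
    simp only [gpdf]
    rw [show -(1/2) * x^2 = -x^2/2 by ring]; ring
  have h1 : ∫ x in Set.Ioi U, x * gaussianPDFReal 0 1 x = gaussianPDFReal 0 1 U := by
    have := integral_Ioi_of_hasDerivAt_of_tendsto' (f := fun x => - gaussianPDFReal 0 1 x)
      (f' := fun x => x * gaussianPDFReal 0 1 x) (a := U) (m := 0) ?_ hIntg.integrableOn ?_
    · rw [this]; ring
    · intro x _
      simp only [funext gpdf]
      have : HasDerivAt (fun x : ℝ => -x^2/2) (-x) x := by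
        have := ((hasDerivAt_pow 2 x).neg).div_const 2
        refine (this.congr_deriv ?_)
        norm_num
        ring
      refine ((this.exp.const_mul (√(2 * π))⁻¹).neg.congr_deriv ?_)
      ring
    · simp only [funext gpdf]
      have : Tendsto (fun x : ℝ => -x^2/2) atTop atBot := by
        have : Tendsto (fun x : ℝ => x^2/2) atTop atTop :=
          (tendsto_pow_atTop two_ne_zero).atTop_div_const (by norm_num)
        refine (tendsto_neg_atTop_atBot.comp this).congr fun x => ?_
        simp [neg_div]
      have := ((tendsto_exp_atBot.comp this).const_mul (√(2 * π))⁻¹).neg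
      simpa using this
  have h2 : U * (gaussianReal 0 1).real (Set.Ici U) ≤ gaussianPDFReal 0 1 U := by
    rw [gapply, integral_Ici_eq_integral_Ioi, ← h1, ← integral_const_mul]
    refine setIntegral_mono_on ((integrable_gaussianPDFReal 0 1).const_mul U).integrableOn
      hIntg.integrableOn measurableSet_Ioi fun x hx => ?_
    exact mul_le_mul_of_nonneg_right (le_of_lt hx) (gaussianPDFReal_nonneg _ _ _)
  have h3 : U * gaussianPDFReal 0 1 U ≤ 1/4 := by
    rw [gpdf]
    have a1 : U * exp (-U^2/2) ≤ exp (-(1/2)) := by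
      have : U ≤ exp ((U^2-1)/2) := by
        have := add_one_le_exp ((U^2-1)/2)
        nlinarith [sq_nonneg (U-1)]
      calc U * exp (-U^2/2) ≤ exp ((U^2-1)/2) * exp (-U^2/2) := by gcongr
        _ = _ := by rw [← exp_add]; congr 1; ring
    have a2 : (2.5:ℝ) ≤ √(2*π) := by
      apply Real.le_sqrt_of_sq_le
      nlinarith [pi_gt_d2]
    have a3 : (1.6:ℝ) ≤ exp (1/2) := by
      have := quadratic_le_exp_of_nonneg (x := (1/2:ℝ)) (by norm_num)
      linarith
    calc U * ((√(2 * π))⁻¹ * exp (-U^2/2)) = (√(2 * π))⁻¹ * (U * exp (-U^2/2)) := by ring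
      _ ≤ (2.5)⁻¹ * (1.6)⁻¹ := by
        rw [exp_neg] at a1
        refine mul_le_mul (by gcongr) (a1.trans (by gcongr)) (by positivity) (by positivity)
      _ = 1/4 := by norm_num
  nlinarith

lemma gsymm (U : ℝ) : (gaussianReal 0 1).real (Set.Iic (-U)) = (gaussianReal 0 1).real (Set.Ici U) := by
  have := gaussianReal_map_neg (μ := 0) (v := 1)
  rw [neg_zero] at this
  conv_lhs => rw [← this]
  rw [map_measureReal_apply measurable_neg measurableSet_Iic]
  congr 1
  ext x; simp

lemma G2 (U : ℝ) (hU : 0 ≤ U) : 0.4 * min U 1 ≤ 1 - 2 * (gaussianReal 0 1).real (Set.Ici U) := by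
  rcases le_or_gt 1 U with h | h
  · rw [min_eq_right h]
    have h1 := G1 U hU
    have h0 : 0 ≤ (gaussianReal 0 1).real (Set.Ici U) := measureReal_nonneg
    nlinarith
  · rw [min_eq_left h.le]
    have e1 : (gaussianReal 0 1).real (Set.Ioo (-U) U) = 1 - 2 * (gaussianReal 0 1).real (Set.Ici U) ∨ U = 0 := by
      rcases eq_or_lt_of_le hU with h0 | h0
      · right; exact h0.symm
      left
      have : (Set.Ioo (-U) U) = (Set.Iic (-U) ∪ Set.Ici U)ᶜ := by
        ext x; simp
      rw [this, measureReal_compl (by measurability), measureReal_union _ measurableSet_Ici, gsymm]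
      · simp; ring
      · rw [Set.disjoint_left]; intro x hx hx'; simp at hx hx'; linarith
    rcases e1 with e1 | e1
    · rw [← e1, gapply]
      have hc : ∀ x ∈ Set.Ioo (-U) U, (0.2:ℝ) ≤ gaussianPDFReal 0 1 x := by
        intro x hx
        rw [gpdf]
        have hx2 : x^2 ≤ 1 := by nlinarith [hx.1, hx.2]
        have b1 : exp (-(1/2)) ≤ exp (-x^2/2) := exp_le_exp.2 (by linarith)
        have b2 : √(2*π) ≤ 2.6 := by
          apply Real.sqrt_le_left (by norm_num) |>.2
          nlinarith [pi_lt_d2]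
        have b3 : (1:ℝ)/2 ≤ exp (-(1/2)) := by
          have := add_one_le_exp (-(1/2:ℝ)); linarith
        have b4 : exp (1/2) ≤ (1.9:ℝ) := by
          have := exp_one_lt_d9
          have h2 : exp (1/2) * exp (1/2) = exp 1 := by rw [← exp_add]; norm_num
          by_contra hh
          push Not at hh
          nlinarith
        have b5 : (1.9:ℝ)⁻¹ ≤ exp (-(1/2)) := by
          rw [exp_neg]; gcongr
        calc (0.2:ℝ) ≤ (2.6)⁻¹ * (1.9)⁻¹ := by norm_num
          _ ≤ _ := by
            refine mul_le_mul (inv_anti₀ (by positivity) b2) (b5.trans b1) (by positivity) (by positivity)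
      have := setIntegral_ge_of_const_le (μ := volume) measurableSet_Ioo (by simp) hc
        (integrable_gaussianPDFReal 0 1).integrableOn
      rw [Measure.real, Real.volume_Ioo, ENNReal.toReal_ofReal (by linarith), smul_eq_mul] at this
      linarith
    · have : (gaussianReal 0 1).real (Set.Ici U) = 1/2 := by
        subst e1
        have h1 := gsymm 0
        have h2 : (gaussianReal 0 1).real (Set.Ici 0) + (gaussianReal 0 1).real (Set.Ici 0)ᶜ = 1 := by
          rw [measureReal_add_measureReal_compl measurableSet_Ici]; simp
        have h3 : (gaussianReal 0 1).real (Set.Ici 0)ᶜ = (gaussianReal 0 1).real (Set.Iic (-0)) := by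
          rw [gapply, gapply, integral_Iic_eq_integral_Iio]; simp
        linarith
      rw [this, e1]; norm_num

lemma scalar_item (θ y p w : ℝ) (hθ : 0 ≤ θ) (hθ1 : θ ≤ 1/2) (hy : 0 ≤ y) (hy1 : y ≤ 1)
    (hw : 0 < w) (hp : 0 ≤ p) (h1 : (y/w)^2 * p ≤ 1/4) (h2 : 0.4 * min (y/w) 1 ≤ 1 - 2 * p) :
    exp (-(θ*y)) + (exp (θ*y) - exp (-(θ*y))) * p ≤
      exp (-(θ * y * (0.4 * min (y/w) 1)) + 3/4 * θ^2 * w^2) := by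
  set x := 2 * (θ*y) with hx
  have hty : 0 ≤ θ*y := mul_nonneg hθ hy
  have hx0 : 0 ≤ x := by positivity
  have hx1 : x ≤ 1 := by nlinarith
  have hexp : exp x - 1 ≤ x + 3/4 * x^2 := by
    have := exp_bound' hx0 hx1 (n := 3) (by norm_num)
    simp [Finset.sum_range_succ, Nat.factorial] at this
    nlinarith [mul_nonneg (sq_nonneg x) (sub_nonneg.2 hx1)]
  have hyp : y^2 * p ≤ w^2 / 4 := by
    have : y^2 * p = w^2 * ((y/w)^2 * p) := by field_simp
    rw [this]; nlinarith [sq_nonneg w]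
  have e1 : exp (θ*y) = exp (-(θ*y)) * exp x := by rw [← exp_add]; congr 1; ring
  calc exp (-(θ*y)) + (exp (θ*y) - exp (-(θ*y))) * p
      = exp (-(θ*y)) * (p * (exp x - 1) + 1) := by rw [e1]; ring
    _ ≤ exp (-(θ*y)) * exp (p * (exp x - 1)) := by
        gcongr; exact add_one_le_exp _
    _ = exp (-(θ*y) + p * (exp x - 1)) := by rw [exp_add]
    _ ≤ _ := by
        apply exp_le_exp.2
        have a1 : p * (exp x - 1) ≤ p * (x + 3/4 * x^2) := by gcongr
        have a2 : θ^2 * (y^2*p) ≤ θ^2 * (w^2/4) := by gcongr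
        have a3 : (θ*y) * (0.4 * min (y/w) 1) ≤ (θ*y) * (1 - 2*p) := by gcongr
        rw [hx] at a1
        nlinarith

/-- sign of the thresholded variable on a pair -/
def sgnP (c : ℝ) (x : ℝ × ℝ) : ℝ := if 0 < c * x.1 - x.2 then 1 else -1

lemma measurable_sgnP (c : ℝ) : Measurable (sgnP c) := by
  unfold sgnP
  refine Measurable.ite ?_ measurable_const measurable_const
  exact measurableSet_lt measurable_const (by fun_prop)

lemma law_pair (a b c : ℝ) (V : ℝ≥0) (hV : V ≠ 0) :
    (((gaussianReal a V).prod (gaussianReal b V)).map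
      (fun x : ℝ × ℝ => (c * x.1 - x.2 - (c * a - b)) / √((1 + c^2) * V))) = gaussianReal 0 1 := by
  set P := (gaussianReal a V).prod (gaussianReal b V)
  have hi : IndepFun (fun x : ℝ × ℝ => c * x.1) (fun x : ℝ × ℝ => - x.2) P :=
    indepFun_prod (X := fun x => c * x) (Y := fun x => -x) (by fun_prop) (by fun_prop)
  have h1 : P.map (fun x : ℝ × ℝ => c * x.1) = gaussianReal (c * a) (NNReal.mk (c^2) (sq_nonneg c) * V) := by
    rw [← gaussianReal_map_const_mul, ← (measurePreserving_fst (μ := gaussianReal a V) (ν := gaussianReal b V)).map_eq,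
      Measure.map_map (by fun_prop) (by fun_prop)]
    rfl
  have h2 : P.map (fun x : ℝ × ℝ => - x.2) = gaussianReal (-b) V := by
    rw [← gaussianReal_map_neg, ← (measurePreserving_snd (μ := gaussianReal a V) (ν := gaussianReal b V)).map_eq,
      Measure.map_map (by fun_prop) (by fun_prop)]
    rfl
  have h3 := gaussianReal_add_gaussianReal_of_indepFun hi h1 h2
  have h4 : (fun x : ℝ × ℝ => (c * x.1 - x.2 - (c * a - b)) / √((1 + c^2) * V)) =
    (fun x => x / √((1 + c^2) * V)) ∘ (fun x => x - (c * a - b)) ∘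
      ((fun x : ℝ × ℝ => c * x.1) + (fun x : ℝ × ℝ => - x.2)) := by
    ext x; simp [sub_eq_add_neg]
  rw [h4, ← Measure.map_map (by fun_prop) (by fun_prop), ← Measure.map_map (by fun_prop) (by fun_prop),
    h3, gaussianReal_map_sub_const, gaussianReal_map_div_const]
  congr 1
  · ring
  · ext
    have : (0:ℝ) < V := by positivity
    have h5 : (√((1 + c^2) * V))^2 = (1 + c^2) * V := Real.sq_sqrt (by positivity)
    simp only [NNReal.coe_div, NNReal.coe_add, NNReal.coe_mul, NNReal.coe_mk, NNReal.coe_one, h5]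
    field_simp
    ring

lemma item (a b c θ : ℝ) (V : ℝ≥0) (hV : V ≠ 0) (ha : a ∈ Set.Icc (0:ℝ) 1) (hb : b ∈ Set.Icc (0:ℝ) 1)
    (hc : 0 < c) (hθ : 0 ≤ θ) (hθ1 : θ ≤ 1/2) :
    ∫ x, exp (θ * (-(sgnP c x) * (c * a - b) / (1 + c))) ∂((gaussianReal a V).prod (gaussianReal b V)) ≤
      exp (-(θ * (|c*a-b|/(1+c)) * (0.4 * min (|c*a-b|/(1+c)/√V) 1)) + 3/4 * θ^2 * (√V)^2) := by
  set d := c * a - b with hd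
  set y := |d|/(1+c) with hy
  set σ := √((1 + c^2) * V) with hσ
  have hVp : (0:ℝ) < V := by positivity
  have hσp : 0 < σ := by positivity
  have hwp : 0 < √(V:ℝ) := by positivity
  set P := (gaussianReal a V).prod (gaussianReal b V) with hP
  set p := (gaussianReal 0 1).real (Set.Ici (|d|/σ)) with hp
  have hp0 : 0 ≤ p := measureReal_nonneg
  have hlaw := law_pair a b c V hV
  rw [← hP, ← hσ, ← hd] at hlaw
  set Z : ℝ × ℝ → ℝ := fun x => (c * x.1 - x.2 - d) / σ with hZ
  have hZm : Measurable Z := by fun_prop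
  have hle : y / √V ≤ |d|/σ := by
    have : σ ≤ (1+c) * √V := by
      rw [hσ, Real.sqrt_mul (by positivity)]
      gcongr
      apply Real.sqrt_le_iff.2 ⟨by positivity, by nlinarith⟩
    rw [hy, div_div]
    gcongr
  have hy0 : 0 ≤ y := by positivity
  have hy1 : y ≤ 1 := by
    rw [hy, div_le_one (by positivity), abs_le]
    obtain ⟨h1, h2⟩ := ha
    obtain ⟨h3, h4⟩ := hb
    constructor <;> nlinarith
  -- bad event
  have key : ∃ B : Set (ℝ × ℝ), MeasurableSet B ∧ P.real B ≤ p ∧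
      ∀ x, exp (θ * (-(sgnP c x) * d / (1 + c))) ≤
        exp (-(θ*y)) + B.indicator (fun _ => exp (θ*y) - exp (-(θ*y))) x := by
    rcases le_or_gt 0 d with h | h
    · refine ⟨Z ⁻¹' Set.Iic (-(|d|/σ)), hZm measurableSet_Iic, ?_, ?_⟩
      · rw [← map_measureReal_apply hZm measurableSet_Iic, hlaw, gsymm]
      · intro x
        have hyd : d / (1+c) = y := by rw [hy, abs_of_nonneg h]
        have hmem : x ∈ Z ⁻¹' Set.Iic (-(|d|/σ)) ↔ ¬ (0 < c * x.1 - x.2) := by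
          simp only [Set.mem_preimage, Set.mem_Iic, hZ]
          rw [abs_of_nonneg h, ← neg_div, div_le_div_iff_of_pos_right hσp]
          constructor
          · intro h; linarith
          · intro h; linarith
        rw [mul_div_assoc, hyd]
        by_cases hx : 0 < c * x.1 - x.2
        · rw [Set.indicator_of_notMem (by rw [hmem]; simpa using hx)]
          simp [sgnP, hx]
        · rw [Set.indicator_of_mem (hmem.2 hx)]
          simp [sgnP, hx]
    · refine ⟨Z ⁻¹' Set.Ici (|d|/σ), hZm measurableSet_Ici, ?_, ?_⟩
      · rw [← map_measureReal_apply hZm measurableSet_Ici, hlaw]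
      · intro x
        have hyd : d / (1+c) = -y := by rw [hy, abs_of_neg h]; ring
        rw [mul_div_assoc, hyd]
        by_cases hx : 0 < c * x.1 - x.2
        · rw [Set.indicator_of_mem]
          · simp [sgnP, hx]
          · simp only [Set.mem_preimage, Set.mem_Ici, hZ]
            rw [abs_of_neg h, div_le_div_iff_of_pos_right hσp]
            linarith
        · have : 0 ≤ (Z ⁻¹' Set.Ici (|d|/σ)).indicator (fun _ => exp (θ*y) - exp (-(θ*y))) x := by
            apply Set.indicator_nonneg
            intro x _
            have : exp (-(θ*y)) ≤ exp (θ*y) := exp_le_exp.2 (by nlinarith [mul_nonneg hθ hy0])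
            linarith
          simpa [sgnP, hx] using this
  obtain ⟨B, hB, hBp, hBx⟩ := key
  have hIntg : Integrable (fun x => exp (-(θ*y)) + B.indicator (fun _ => exp (θ*y) - exp (-(θ*y))) x) P :=
    (integrable_const _).add ((integrable_const _).indicator hB)
  have hE : 0 ≤ exp (θ*y) - exp (-(θ*y)) := by
    have : exp (-(θ*y)) ≤ exp (θ*y) := exp_le_exp.2 (by nlinarith [mul_nonneg hθ hy0])
    linarith
  calc _ ≤ ∫ x, (exp (-(θ*y)) + B.indicator (fun _ => exp (θ*y) - exp (-(θ*y))) x) ∂P :=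
        integral_mono_of_nonneg (ae_of_all _ fun x => (exp_pos _).le) hIntg (ae_of_all _ hBx)
    _ = exp (-(θ*y)) + (exp (θ*y) - exp (-(θ*y))) * P.real B := by
        rw [integral_add (integrable_const _) ((integrable_const _).indicator hB),
          integral_indicator_const _ hB]
        simp [mul_comm]
    _ ≤ exp (-(θ*y)) + (exp (θ*y) - exp (-(θ*y))) * p := by gcongr
    _ ≤ _ := by
      apply scalar_item θ y p _ hθ hθ1 hy0 hy1 hwp hp0
      · refine le_trans ?_ (G1 (|d|/σ) (by positivity))
        gcongr
      · refine le_trans ?_ (G2 (|d|/σ) (by positivity))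
        gcongr

/-- product structure -/
lemma thresh_map (m q : ℕ) (μa μb : Fin m → ℝ) :
    threshMeasure m q μa μb =
      (Measure.pi fun i => (gaussianReal (μa i) ((m : ℝ≥0) / (q : ℝ≥0))).prod
        (gaussianReal (μb i) ((m : ℝ≥0) / (q : ℝ≥0)))).map
        (fun f (p : Fin m × Bool) => if p.2 then (f p.1).1 else (f p.1).2) := by
  unfold threshMeasure
  have hm : Measurable (fun (f : Fin m → ℝ × ℝ) (p : Fin m × Bool) =>
      if p.2 then (f p.1).1 else (f p.1).2) := by
    refine measurable_pi_lambda _ fun p => ?_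
    rcases p with ⟨i, b⟩
    cases b <;> simp <;> fun_prop
  apply Measure.pi_eq
  intro s hs
  rw [Measure.map_apply hm (MeasurableSet.univ_pi hs)]
  have : (fun (f : Fin m → ℝ × ℝ) (p : Fin m × Bool) =>
      if p.2 then (f p.1).1 else (f p.1).2) ⁻¹' Set.univ.pi s =
      Set.univ.pi fun i => s (i, true) ×ˢ s (i, false) := by
    ext f
    simp [Set.mem_pi, Prod.forall]
    constructor
    · intro h i; exact ⟨(h i).2, (h i).1⟩
    · intro h i; exact ⟨(h i).2, (h i).1⟩
  rw [this, Measure.pi_pi, Fintype.prod_prod_type]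
  simp [Measure.prod_prod]

lemma det (m : ℕ) (μa μb : Fin m → ℝ) (Δ c : ℝ) (hc : 0 < c) (hopt : optEnvy μa μb ≤ -Δ) :
    Δ ≤ ∑ i, |c * μa i - μb i| / (1 + c) := by
  obtain ⟨A, hA⟩ := exists_eq_ciInf_of_finite (f := fun A : Finset (Fin m) => envy μa μb A)
  have h : envy μa μb A ≤ -Δ := by rw [hA]; exact hopt
  have h1 : envyAB μa A ≤ -Δ := (le_max_left _ _).trans h
  have h2 : envyBA μb A ≤ -Δ := (le_max_right _ _).trans h
  unfold envyAB at h1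
  unfold envyBA at h2
  rw [← Finset.sum_div, le_div_iff₀ (by positivity), ← Finset.sum_add_sum_compl A]
  have a1 : ∑ i ∈ A, (c * μa i - μb i) ≤ ∑ i ∈ A, |c * μa i - μb i| :=
    Finset.sum_le_sum fun i _ => le_abs_self _
  have a2 : ∑ i ∈ Aᶜ, -(c * μa i - μb i) ≤ ∑ i ∈ Aᶜ, |c * μa i - μb i| :=
    Finset.sum_le_sum fun i _ => neg_le_abs _
  rw [Finset.sum_sub_distrib, ← Finset.mul_sum] at a1
  rw [Finset.sum_neg_distrib, Finset.sum_sub_distrib, ← Finset.mul_sum] at a2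
  nlinarith

lemma main_bound (m : ℕ) (hm : 2 ≤ m) (μa μb : Fin m → ℝ)
    (hμa : ∀ i, μa i ∈ Set.Icc (0 : ℝ) 1) (hμb : ∀ i, μb i ∈ Set.Icc (0 : ℝ) 1)
    (c θ ε : ℝ) (hc : 0 < c) (hθ : 0 ≤ θ) (hθ1 : θ ≤ 1/2) (V : ℝ≥0) (hV : V ≠ 0) :
    (Measure.pi fun i => (gaussianReal (μa i) V).prod (gaussianReal (μb i) V)).real
      {f | ε ≤ ∑ i, (-(sgnP c (f i)) * (c * μa i - μb i) / (1 + c))} ≤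
    exp (-θ * ε + ∑ i, (-(θ * (|c*μa i-μb i|/(1+c)) * (0.4 * min (|c*μa i-μb i|/(1+c)/√V) 1))
      + 3/4 * θ^2 * (√V)^2)) := by
  set P := (Measure.pi fun i => (gaussianReal (μa i) V).prod (gaussianReal (μb i) V)) with hP
  set X : (i : Fin m) → (ℝ × ℝ) → ℝ := fun i x => (-(sgnP c x) * (c * μa i - μb i) / (1 + c)) with hX
  have hXm : ∀ i, Measurable (X i) := fun i =>
    (((measurable_sgnP c).neg).mul_const _).div_const _
  have hind : iIndepFun (fun i (f : Fin m → ℝ × ℝ) => X i (f i)) P :=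
    iIndepFun_pi fun i => (hXm i).aemeasurable
  have hXm' : ∀ i, Measurable (fun (f : Fin m → ℝ × ℝ) => X i (f i)) := fun i =>
    (hXm i).comp (measurable_pi_apply i)
  have habs : ∀ i x, X i x ≤ |c * μa i - μb i| / (1+c) := by
    intro i x
    simp only [hX]
    gcongr
    unfold sgnP
    split_ifs
    · simpa using neg_le_abs (c * μa i - μb i)
    · simpa using le_abs_self (c * μa i - μb i)
  have h1 := measure_ge_le_exp_mul_mgf (μ := P) (t := θ) (X := ∑ i, fun (f : Fin m → ℝ × ℝ) => X i (f i)) ε hθ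
    (by
      refine Integrable.of_bound (C := exp (θ * ∑ i, |c * μa i - μb i| / (1+c))) ?_ (ae_of_all _ fun f => ?_)
      · apply Measurable.aestronglyMeasurable
        apply Measurable.exp
        apply Measurable.const_mul
        simpa [Finset.sum_fn] using Finset.measurable_sum Finset.univ fun i _ => hXm' i
      · rw [Real.norm_eq_abs, abs_exp, exp_le_exp]
        gcongr
        rw [Finset.sum_apply]
        exact Finset.sum_le_sum fun i _ => habs i _)
  rw [hind.mgf_sum hXm'] at h1
  simp only [Finset.sum_apply] at h1
  refine h1.trans ?_
  rw [exp_add, exp_sum]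
  gcongr with i
  · exact fun i _ => mgf_nonneg
  have : mgf (fun (f : Fin m → ℝ × ℝ) => X i (f i)) P θ =
      ∫ x, exp (θ * X i x) ∂((gaussianReal (μa i) V).prod (gaussianReal (μb i) V)) := by
    rw [mgf, ← (measurePreserving_eval (fun i => (gaussianReal (μa i) V).prod (gaussianReal (μb i) V)) i).map_eq,
      integral_map (measurable_pi_apply i).aemeasurable]
    exact ((hXm i).const_mul _).exp.aestronglyMeasurable
  rw [this]
  exact item _ _ c θ V hV (hμa i) (hμb i) hc hθ hθ1

lemma key_y (t w y : ℝ) (ht1 : t ≤ 1) (hy0 : 0 ≤ y) (hwp : 0 < w) :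
    0.4 * t * y - 0.2 * w * t^2 ≤ y * (0.4 * min (y/w) 1) := by
  obtain ⟨u, hu⟩ : ∃ u, u = y/w := ⟨_, rfl⟩
  have hyu : y = w * u := by rw [hu]; field_simp
  rw [← hu, hyu]
  have hu0 : 0 ≤ u := by rw [hu]; positivity
  have : 0.4 * t * u - 0.2 * t^2 ≤ u * (0.4 * min u 1) := by
    rcases le_total u 1 with h | h
    · rw [min_eq_left h]; nlinarith [sq_nonneg (u-t)]
    · rw [min_eq_right h]; nlinarith [sq_nonneg t]
  have := mul_le_mul_of_nonneg_left this hwp.le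
  linarith

set_option maxHeartbeats 1000000 in
theorem stmt10 {m : ℕ} (μa μb : Fin m → ℝ)
    (hμa : ∀ i, μa i ∈ Set.Icc (0 : ℝ) 1) (hμb : ∀ i, μb i ∈ Set.Icc (0 : ℝ) 1)
    (Δ : ℝ) (hΔ : 0 < Δ) (hopt : optEnvy μa μb ≤ -Δ)
    (q : ℕ) (hq1 : 1 ≤ q) (hq2 : (q : ℝ) ≤ 1 / 2 * m ^ 3 / Δ ^ 2)
    (hq3 : (q : ℝ) ≤ m ^ 2 / Real.log m ^ 2)
    (c : ℝ) (hc : 0 < c) :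
    threshMeasure m q μa μb
        {ω | -(1 / 5) * (m : ℝ) ^ (-(3 : ℝ) / 2) * (q : ℝ) ^ ((1 : ℝ) / 2) * Δ ^ 2 +
            (m / Real.sqrt q) * Real.log m < fFun μa μb c ω} ≤
      ENNReal.ofReal (2 * Real.exp (-(3 / 10) * Real.log m ^ 2)) := by
  have hqp : (1:ℝ) ≤ q := by exact_mod_cast hq1
  have hm2 : 2 ≤ m := by
    by_contra h
    have : m = 0 ∨ m = 1 := by omega
    rcases this with h | h
    · subst h; norm_num at hq2; linarith
    · subst h; norm_num at hq3; linarith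
  have hmp : (2:ℝ) ≤ m := by exact_mod_cast hm2
  set L := Real.log m with hL
  have hLp : 0 < L := Real.log_pos (by linarith)
  set V : ℝ≥0 := (m : ℝ≥0) / (q : ℝ≥0) with hV
  have hVr : (V:ℝ) = m / q := by simp [hV]
  have hV0 : V ≠ 0 := by
    rw [hV]; apply div_ne_zero <;> norm_cast <;> omega
  obtain ⟨r, hr⟩ : ∃ r, r = √(m:ℝ) := ⟨_, rfl⟩
  obtain ⟨s, hs⟩ : ∃ s, s = √(q:ℝ) := ⟨_, rfl⟩
  have hrp : 0 < r := by rw [hr]; positivity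
  have hsp : 0 < s := by rw [hs]; positivity
  have hr2 : (m:ℝ) = r^2 := by rw [hr, Real.sq_sqrt (by positivity)]
  have hs2 : (q:ℝ) = s^2 := by rw [hs, Real.sq_sqrt (by positivity)]
  have hw : √(V:ℝ) = r / s := by rw [hVr, Real.sqrt_div (by positivity), hr, hs]
  have hpow : (m : ℝ) ^ (-(3 : ℝ) / 2) = (r^3)⁻¹ := by
    rw [hr2, ← Real.rpow_natCast r 2, ← Real.rpow_mul hrp.le, ← Real.rpow_natCast r 3,
      ← Real.rpow_neg hrp.le]
    norm_num
  have hpow2 : (q : ℝ) ^ ((1 : ℝ) / 2) = s := by rw [← Real.sqrt_eq_rpow, hs]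
  rw [hpow, hpow2, ← hs]
  set ε := -(1 / 5) * (r^3)⁻¹ * s * Δ ^ 2 + (m / s) * L with hε
  set θ := L * s / (2 * m) with hθ
  have hθ0 : 0 ≤ θ := by positivity
  have hθ1 : θ ≤ 1/2 := by
    rw [hθ, div_le_div_iff₀ (by positivity) (by norm_num)]
    have : (L*s)^2 ≤ (m:ℝ)^2 := by
      rw [le_div_iff₀ (by positivity)] at hq3
      rw [hs2] at hq3; nlinarith
    have := abs_le_of_sq_le_sq' this (by positivity)
    linarith [this.2]
  have hb := main_bound m hm2 μa μb hμa hμb c θ ε hc hθ0 hθ1 V hV0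
  have hdet := det m μa μb Δ c hc hopt
  -- the exponent
  have hexpo : -θ * ε + ∑ i, (-(θ * (|c*μa i-μb i|/(1+c)) * (0.4 * min (|c*μa i-μb i|/(1+c)/√V) 1))
      + 3/4 * θ^2 * (√V)^2) ≤ -(3/10) * L^2 := by
    set t := Δ * s / (r^3) with ht
    have ht0 : 0 ≤ t := by positivity
    have ht1 : t ≤ 1 := by
      rw [ht, div_le_one (by positivity)]
      rw [le_div_iff₀ (by positivity), hr2, hs2] at hq2
      refine (abs_le_of_sq_le_sq' (?_ : (Δ*s)^2 ≤ (r^3)^2) (by positivity)).2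
      nlinarith [sq_nonneg (r^3)]
    have hi : ∀ i, (-(θ * (|c*μa i-μb i|/(1+c)) * (0.4 * min (|c*μa i-μb i|/(1+c)/√V) 1))
        + 3/4 * θ^2 * (√V)^2) ≤
        -(θ * 0.4 * t * (|c*μa i-μb i|/(1+c))) + θ * 0.2 * (r/s) * t^2 + 3/4 * θ^2 * (r/s)^2 := by
      intro i
      rw [hw]
      have hkey := key_y t (r/s) (|c*μa i-μb i|/(1+c)) ht1 (by positivity) (by positivity)
      have := mul_le_mul_of_nonneg_left hkey hθ0
      linarith
    have hsum := Finset.sum_le_sum fun i (_ : i ∈ (Finset.univ : Finset (Fin m))) => hi i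
    have e : ∑ i : Fin m, (-(θ * 0.4 * t * (|c*μa i-μb i|/(1+c))) + θ * 0.2 * (r/s) * t^2 + 3/4 * θ^2 * (r/s)^2)
        = -(θ * 0.4 * t * ∑ i, (|c*μa i-μb i|/(1+c))) + m * (θ * 0.2 * (r/s) * t^2 + 3/4 * θ^2 * (r/s)^2) := by
      simp only [add_assoc]
      rw [Finset.sum_add_distrib, Finset.sum_neg_distrib, ← Finset.mul_sum]
      simp
      ring
    rw [e] at hsum
    have h3 : θ * 0.4 * t * Δ ≤ θ * 0.4 * t * ∑ i, (|c*μa i-μb i|/(1+c)) := by gcongr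
    have h4 : -θ * ε + (-(θ * 0.4 * t * Δ) + m * (θ * 0.2 * (r/s) * t^2 + 3/4 * θ^2 * (r/s)^2))
        = -(5/16) * L^2 := by
      rw [hε, hθ, ht, hr2]
      field_simp
      ring
    have h5 : 0 ≤ L^2 := sq_nonneg L
    linarith
  have hm' : Measurable (fun (f : Fin m → ℝ × ℝ) (p : Fin m × Bool) =>
      if p.2 then (f p.1).1 else (f p.1).2) := by
    refine measurable_pi_lambda _ fun p => ?_
    rcases p with ⟨i, b⟩
    cases b <;> simp <;> fun_prop
  have hxs : ∀ i, Measurable (fun ω : Fin m × Bool → ℝ => xSign c ω i) := by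
    intro i
    unfold xSign
    refine Measurable.ite ?_ measurable_const measurable_const
    exact measurableSet_lt measurable_const (by fun_prop)
  have hfm : Measurable (fFun μa μb c) := by
    unfold fFun eA eB
    fun_prop
  rw [thresh_map, Measure.map_apply hm' (measurableSet_lt measurable_const hfm)]
  rw [← hV]
  refine le_trans (measure_mono (?_ : _ ⊆ {f : Fin m → ℝ × ℝ |
    ε ≤ ∑ i, (-(sgnP c (f i)) * (c * μa i - μb i) / (1 + c))})) ?_
  · intro f hf
    simp only [Set.mem_preimage, Set.mem_ofPred_eq] at hf ⊢
    refine hf.le.trans (le_of_eq ?_)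
    simp only [fFun, eA, eB]
    rw [← Finset.sum_div, ← Finset.sum_neg_distrib, Finset.mul_sum, ← Finset.sum_add_distrib]
    congr 1
    refine Finset.sum_congr rfl fun i _ => ?_
    simp only [xSign, sgnP, if_true]
    simp
    split_ifs <;> ring
  · rw [← ofReal_measureReal]
    apply ENNReal.ofReal_le_ofReal
    refine hb.trans ?_
    have := exp_le_exp.2 hexpo
    have := exp_pos (-(3/10) * L^2)
    linarith
end
end

section
/- Fix reals μ^a, μ^b, a variance s² > 0, and c > 0. Let v^a ~ N(μ^a, s²) and v^b ~ N(μ^b, s²) be independent, and let x = 1 if c v^a − v^b > 0 and x = −1 otherwise. Then (i) the random variables c v^a − v^b and v^a − μ^a + c(v^b − μ^b) are independent, and (ii) the random variable x · (v^a − μ^a + c(v^b − μ^b)) has the Gaussian distribution N(0, (1+c²) s²). -/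
open MeasureTheory ProbabilityTheory Real
open scoped ENNReal NNReal

noncomputable section

/-- for independent `v^a ~ N(μ^a, s²)` and `v^b ~ N(μ^b, s²)` and
`x = sign(c v^a − v^b)`, (i) `c v^a − v^b` and `v^a − μ^a + c (v^b − μ^b)` are independent,
and (ii) `x (v^a − μ^a + c (v^b − μ^b)) ~ N(0, (1+c²) s²)`. -/
theorem stmt12 (μa μb s2 c : ℝ) (hs2 : 0 < s2) (hc : 0 < c)
    (P : Measure (ℝ × ℝ))
    (hP : P = (gaussianReal μa s2.toNNReal).prod (gaussianReal μb s2.toNNReal)) :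
    IndepFun (fun p : ℝ × ℝ => c * p.1 - p.2)
        (fun p : ℝ × ℝ => p.1 - μa + c * (p.2 - μb)) P ∧
      Measure.map (fun p : ℝ × ℝ =>
          (if 0 < c * p.1 - p.2 then (1 : ℝ) else -1) * (p.1 - μa + c * (p.2 - μb))) P =
        gaussianReal 0 ((1 + c ^ 2) * s2).toNNReal := by
  have hprob : IsProbabilityMeasure P := by rw [hP]; infer_instance
  have h1 : HasLaw (fun p : ℝ × ℝ => p.1) (gaussianReal μa s2.toNNReal) P :=
    ⟨by fun_prop, by
      rw [hP]; exact (measurePreserving_fst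
        (μ := gaussianReal μa s2.toNNReal) (ν := gaussianReal μb s2.toNNReal)).map_eq⟩
  have h2 : HasLaw (fun p : ℝ × ℝ => p.2) (gaussianReal μb s2.toNNReal) P :=
    ⟨by fun_prop, by
      rw [hP]; exact (measurePreserving_snd
        (μ := gaussianReal μa s2.toNNReal) (ν := gaussianReal μb s2.toNNReal)).map_eq⟩
  have h12 : IndepFun (fun p : ℝ × ℝ => p.1) (fun p : ℝ × ℝ => p.2) P := by
    rw [hP]; exact indepFun_prod measurable_id measurable_id
  have g1 : HasGaussianLaw (fun p : ℝ × ℝ => p.1) P := h1.hasGaussianLaw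
  have g2 : HasGaussianLaw (fun p : ℝ × ℝ => p.2) P := h2.hasGaussianLaw
  have g12 := h12.hasGaussianLaw g1 g2
  have m1 : MemLp (fun p : ℝ × ℝ => p.1) 2 P := g1.memLp_two
  have m2 : MemLp (fun p : ℝ × ℝ => p.2) 2 P := g2.memLp_two
  have v1 : Var[fun p : ℝ × ℝ => p.1; P] = s2 := by
    rw [h1.variance_eq]; simp [hs2.le]
  have v2 : Var[fun p : ℝ × ℝ => p.2; P] = s2 := by
    rw [h2.variance_eq]; simp [hs2.le]
  have hind0 : IndepFun (fun p : ℝ × ℝ => c * p.1 - p.2) (fun p : ℝ × ℝ => p.1 + c * p.2) P := by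
    apply HasGaussianLaw.indepFun_of_covariance_eq_zero
    · let L : ℝ × ℝ →L[ℝ] ℝ × ℝ :=
        (c • ContinuousLinearMap.fst ℝ ℝ ℝ - ContinuousLinearMap.snd ℝ ℝ ℝ).prod
          (ContinuousLinearMap.fst ℝ ℝ ℝ + c • ContinuousLinearMap.snd ℝ ℝ ℝ)
      exact g12.map L
    · have e0 := h12.covariance_eq_zero m1 m2
      have e0' := covariance_comm (μ := P) (fun p : ℝ × ℝ => p.1) (fun p : ℝ × ℝ => p.2)
      have hadd : (fun p : ℝ × ℝ => p.1 + c * p.2) =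
        (fun p : ℝ × ℝ => p.1) + (fun p : ℝ × ℝ => c * p.2) := rfl
      rw [covariance_fun_sub_left (m1.const_mul c) m2 (show MemLp (fun p : ℝ × ℝ => p.1 + c * p.2) 2 P from m1.add (m2.const_mul c)),
        hadd, covariance_add_right (m1.const_mul c) m1 (m2.const_mul c),
        covariance_add_right m2 m1 (m2.const_mul c)]
      simp only [covariance_const_mul_left, covariance_const_mul_right]
      rw [← e0', e0, covariance_self (by fun_prop), covariance_self (by fun_prop), v1, v2]
      ring
  have hind : IndepFun (fun p : ℝ × ℝ => c * p.1 - p.2)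
        (fun p : ℝ × ℝ => p.1 - μa + c * (p.2 - μb)) P := by
    have := hind0.comp (φ := id) (ψ := fun y => y - (μa + c * μb)) measurable_id (by fun_prop)
    have e : (fun p : ℝ × ℝ => p.1 - μa + c * (p.2 - μb)) =
        (fun y => y - (μa + c * μb)) ∘ (fun p : ℝ × ℝ => p.1 + c * p.2) := by
      funext p; simp only [Function.comp_apply]; ring
    rw [e]
    exact this
  refine ⟨hind, ?_⟩
  have hY : Measure.map (fun p : ℝ × ℝ => p.1 - μa + c * (p.2 - μb)) P =
      gaussianReal 0 ((1 + c ^ 2) * s2).toNNReal := by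
    have a1 := gaussianReal_sub_const h1 μa
    have a2 := gaussianReal_const_mul (gaussianReal_sub_const h2 μb) c
    have ai : IndepFun (fun p : ℝ × ℝ => p.1 - μa) (fun p : ℝ × ℝ => c * (p.2 - μb)) P :=
      h12.comp (φ := fun x => x - μa) (ψ := fun y => c * (y - μb)) (by fun_prop) (by fun_prop)
    have h := gaussianReal_add_gaussianReal_of_indepFun ai a1.map_eq a2.map_eq
    simp only [sub_self, mul_zero, add_zero] at h
    refine Eq.trans h ?_
    congr 1
    ext
    rw [Real.coe_toNNReal _ (by positivity)]
    simp [hs2.le]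
    ring
  set ν := gaussianReal 0 ((1 + c ^ 2) * s2).toNNReal with hν
  set X := fun p : ℝ × ℝ => c * p.1 - p.2 with hX
  set Y := fun p : ℝ × ℝ => p.1 - μa + c * (p.2 - μb) with hYd
  have mX : Measurable X := by fun_prop
  have mY : Measurable Y := by fun_prop
  have hpair := (indepFun_iff_map_prod_eq_prod_map_map mX.aemeasurable mY.aemeasurable).1 hind
  rw [hY] at hpair
  have hXp : IsProbabilityMeasure (P.map X) := Measure.isProbabilityMeasure_map mX.aemeasurable
  let G : ℝ × ℝ → ℝ := fun q => (if 0 < q.1 then (1 : ℝ) else -1) * q.2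
  have mG : Measurable G :=
    (Measurable.ite (measurableSet_lt measurable_const measurable_fst) measurable_const
      measurable_const).mul measurable_snd
  have hcomp : Measure.map (G ∘ fun p => (X p, Y p)) P = ν := by
    rw [← Measure.map_map mG (mX.prodMk mY), hpair]
    ext s hs
    rw [Measure.map_apply mG hs, Measure.prod_apply (mG hs)]
    have key : ∀ u : ℝ, ν (Prod.mk u ⁻¹' (G ⁻¹' s)) = ν s := by
      intro u
      by_cases hu : 0 < u
      · congr 1
        ext y; simp [G, hu]
      · have hn : ν.map (fun x => -x) = ν := by rw [hν, gaussianReal_map_neg, neg_zero]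
        conv_rhs => rw [← hn, Measure.map_apply measurable_neg hs]
        congr 1
        ext y; simp [G, hu]
    simp [key]
  exact hcomp
end
end

section
/- Let μ^a, μ^b ∈ [0,1]^m, and let q ≥ 1. In the thresholding allocation model (with estimate variance m/q), for every fixed c > 0 the random variable g(c) = (e_a(c) − e'_a(c) − c·e_b(c) + c·e'_b(c))/(1+c) has the Gaussian distribution N(0, (m²/q)·(1+c²)/(1+c)²); consequently, with probability at least 1 − 2 m⁶ exp(−(log m)²/2), it holds simultaneously for all c in the grid C = {k/m³ : k = 1, …, m⁶} that |g(c)| ≤ (m/√q)·log m. -/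
open MeasureTheory ProbabilityTheory Real Filter
open scoped ENNReal NNReal Classical

noncomputable section

/-- `g(c) = (e_a(c) − e'_a(c) − c e_b(c) + c e'_b(c))/(1+c)`. -/
def gFun {m : ℕ} (μa μb : Fin m → ℝ) (c : ℝ) (ω : (Fin m × Bool) → ℝ) : ℝ :=
  (eA μa c ω - eA' c ω - c * eB μb c ω + c * eB' c ω) / (1 + c)

instance threshMeasure_prob (m q : ℕ) (μa μb : Fin m → ℝ) :
    IsProbabilityMeasure (threshMeasure m q μa μb) := by
  unfold threshMeasure; infer_instance

lemma thresh_indep (m q : ℕ) (μa μb : Fin m → ℝ) :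
    iIndepFun (fun (p : Fin m × Bool) (ω : (Fin m × Bool) → ℝ) => ω p)
      (threshMeasure m q μa μb) := by
  unfold threshMeasure
  exact iIndepFun_pi (X := fun _ => id) (fun _ => aemeasurable_id)

lemma thresh_map_eval (m q : ℕ) (μa μb : Fin m → ℝ) (p : Fin m × Bool) :
    (threshMeasure m q μa μb).map (fun ω => ω p) =
      gaussianReal (if p.2 then μa p.1 else μb p.1) ((m : ℝ≥0) / (q : ℝ≥0)) := by
  unfold threshMeasure
  exact (measurePreserving_eval _ p).map_eq

lemma thresh_gauss_eval (m q : ℕ) (μa μb : Fin m → ℝ) (p : Fin m × Bool) :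
    HasGaussianLaw (fun ω : (Fin m × Bool) → ℝ => ω p) (threshMeasure m q μa μb) where
  isGaussian_map := by rw [thresh_map_eval]; infer_instance

lemma thresh_gauss (m q : ℕ) (μa μb : Fin m → ℝ) :
    HasGaussianLaw (fun ω : (Fin m × Bool) → ℝ => ω) (threshMeasure m q μa μb) :=
  (thresh_indep m q μa μb).hasGaussianLaw (thresh_gauss_eval m q μa μb)

lemma thresh_cov (m q : ℕ) (μa μb : Fin m → ℝ) (p r : Fin m × Bool) :
    cov[fun ω : (Fin m × Bool) → ℝ => ω p, fun ω => ω r; threshMeasure m q μa μb]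
      = if p = r then (m : ℝ) / q else 0 := by
  split_ifs with h
  · subst h
    rw [covariance_self (measurable_pi_apply p).aemeasurable]
    have h2 := variance_fun_id_gaussianReal (μ := if p.2 then μa p.1 else μb p.1)
      (v := (m : ℝ≥0) / (q : ℝ≥0))
    rw [← thresh_map_eval m q μa μb p, variance_map (X := fun x : ℝ => x) (Y := fun ω : (Fin m × Bool) → ℝ => ω p)
      measurable_id.aemeasurable (measurable_pi_apply p).aemeasurable] at h2
    rw [show (fun ω : (Fin m × Bool) → ℝ => ω p) = (fun x : ℝ => x) ∘ (fun ω => ω p) from rfl, h2]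
    simp
  · exact ((thresh_indep m q μa μb).indepFun h).covariance_eq_zero
      (thresh_gauss_eval m q μa μb p).memLp_two (thresh_gauss_eval m q μa μb r).memLp_two

def UU {m : ℕ} (c : ℝ) (i : Fin m) (ω : (Fin m × Bool) → ℝ) : ℝ := c * ω (i, true) - ω (i, false)
def WW {m : ℕ} (c : ℝ) (i : Fin m) (ω : (Fin m × Bool) → ℝ) : ℝ := ω (i, true) + c * ω (i, false)

def UWlin (m : ℕ) (c : ℝ) : ((Fin m × Bool) → ℝ) →ₗ[ℝ] ((Fin m → ℝ) × (Fin m → ℝ)) where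
  toFun ω := (fun i => UU c i ω, fun i => WW c i ω)
  map_add' x y := by
    ext i <;> simp [UU, WW] <;> ring
  map_smul' a x := by
    ext i <;> simp [UU, WW] <;> ring

lemma UW_indep (m q : ℕ) (μa μb : Fin m → ℝ) (c : ℝ) :
    IndepFun (fun ω (i : Fin m) => UU c i ω) (fun ω (i : Fin m) => WW c i ω)
      (threshMeasure m q μa μb) := by
  apply HasGaussianLaw.indepFun_of_covariance_eval
  · exact (thresh_gauss m q μa μb).map_fun (UWlin m c).toContinuousLinearMap
  · intro i j
    have hL := fun p => (thresh_gauss_eval m q μa μb p).memLp_two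
    change cov[(fun ω : (Fin m × Bool) → ℝ => c * ω (i, true)) - (fun ω => ω (i, false)),
      (fun ω => ω (j, true)) + (fun ω => c * ω (j, false)); threshMeasure m q μa μb] = 0
    rw [covariance_sub_left ((hL _).const_mul c) (hL _) ((hL _).add ((hL _).const_mul c)),
      covariance_add_right ((hL _).const_mul c) (hL _) ((hL _).const_mul c),
      covariance_add_right (hL _) (hL _) ((hL _).const_mul c)]
    simp only [covariance_const_mul_left, covariance_const_mul_right, thresh_cov]
    simp

lemma thresh_lin_law (m q : ℕ) (μa μb : Fin m → ℝ) (a : Fin m × Bool → ℝ) :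
    (threshMeasure m q μa μb).map
      (fun ω => ∑ p, a p * (ω p - (if p.2 then μa p.1 else μb p.1))) =
      gaussianReal 0 ((∑ p, a p ^ 2) * ((m : ℝ) / q)).toNNReal := by
  apply Measure.ext_of_charFun
  have hind := (thresh_indep m q μa μb).comp
    (fun p x => a p * (x - (if p.2 then μa p.1 else μb p.1))) (by intro p; fun_prop)
  have h := hind.charFun_map_fun_sum_eq_prod (by
    intro p; apply Measurable.aemeasurable; unfold Function.comp; fun_prop)
  simp only [Function.comp_def] at h
  rw [h]
  have hlaw : ∀ p : Fin m × Bool, (threshMeasure m q μa μb).map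
      (fun ω => a p * (ω p - (if p.2 then μa p.1 else μb p.1))) =
      gaussianReal 0 (NNReal.mk (a p ^ 2) (sq_nonneg _) * ((m : ℝ≥0) / (q : ℝ≥0))) := by
    intro p
    have h1 := gaussianReal_sub_const (X := fun ω : (Fin m × Bool) → ℝ => ω p)
      ⟨(measurable_pi_apply p).aemeasurable, thresh_map_eval m q μa μb p⟩ (if p.2 then μa p.1 else μb p.1)
    have h2 := (gaussianReal_const_mul h1 (a p)).map_eq
    simpa using h2
  ext t
  rw [Finset.prod_apply]
  simp only [hlaw, charFun_gaussianReal]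
  rw [← Complex.exp_sum]
  congr 1
  rw [Real.coe_toNNReal _ (mul_nonneg (Finset.sum_nonneg fun _ _ => sq_nonneg _) (by positivity))]
  push_cast
  simp only [Complex.ofReal_zero, mul_zero, zero_mul, zero_sub, Finset.sum_neg_distrib,
    Finset.sum_mul, NNReal.coe_mk, Finset.sum_div]

def sg (u : ℝ) : ℝ := if 0 < u then 1 else -1

lemma sg_sq (u : ℝ) : sg u ^ 2 = 1 := by unfold sg; split_ifs <;> norm_num

lemma measurable_sg : Measurable sg :=
  Measurable.ite measurableSet_Ioi measurable_const measurable_const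

def Phi {m : ℕ} (μa μb : Fin m → ℝ) (c : ℝ) (u w : Fin m → ℝ) : ℝ :=
  (∑ i, sg (u i) * (w i - (μa i + c * μb i))) / (1 + c)

lemma measurable_Phi {m : ℕ} (μa μb : Fin m → ℝ) (c : ℝ) :
    Measurable (Function.uncurry (Phi μa μb c)) := by
  have := measurable_sg
  unfold Phi Function.uncurry
  fun_prop

lemma gFun_eq {m : ℕ} (μa μb : Fin m → ℝ) (c : ℝ) (ω : (Fin m × Bool) → ℝ) :
    gFun μa μb c ω = Phi μa μb c (fun i => UU c i ω) (fun i => WW c i ω) := by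
  unfold gFun Phi eA eA' eB eB'
  congr 1
  rw [Finset.mul_sum, Finset.mul_sum, ← Finset.sum_neg_distrib, ← Finset.sum_neg_distrib,
    ← Finset.sum_sub_distrib, ← Finset.sum_sub_distrib, ← Finset.sum_add_distrib]
  refine Finset.sum_congr rfl fun i _ => ?_
  have : xSign c ω i = sg (UU c i ω) := rfl
  rw [this]; unfold WW; ring

lemma measurable_UU {m : ℕ} (c : ℝ) :
    Measurable (fun (ω : (Fin m × Bool) → ℝ) (i : Fin m) => UU c i ω) := by
  unfold UU; fun_prop

lemma measurable_WW {m : ℕ} (c : ℝ) :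
    Measurable (fun (ω : (Fin m × Bool) → ℝ) (i : Fin m) => WW c i ω) := by
  unfold WW; fun_prop

lemma measurable_gFun {m : ℕ} (μa μb : Fin m → ℝ) (c : ℝ) : Measurable (gFun μa μb c) := by
  have : gFun μa μb c = Function.uncurry (Phi μa μb c) ∘
      (fun ω => (fun i => UU c i ω, fun i => WW c i ω)) := by
    ext ω; exact gFun_eq μa μb c ω
  rw [this]
  exact (measurable_Phi μa μb c).comp ((measurable_UU c).prodMk (measurable_WW c))

lemma Phi_law (m q : ℕ) (μa μb : Fin m → ℝ) (c : ℝ) (hc : 0 < c) (u : Fin m → ℝ) :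
    ((threshMeasure m q μa μb).map (fun ω (i : Fin m) => WW c i ω)).map (Phi μa μb c u) =
      gaussianReal 0 ((m : ℝ) ^ 2 / q * ((1 + c ^ 2) / (1 + c) ^ 2)).toNNReal := by
  rw [Measure.map_map (measurable_Phi μa μb c).of_uncurry_left (measurable_WW c)]
  have h := thresh_lin_law m q μa μb
    (fun p => sg (u p.1) * (if p.2 then 1 else c) / (1 + c))
  have e1 : (Phi μa μb c u ∘ fun ω (i : Fin m) => WW c i ω) = (fun ω => ∑ p : Fin m × Bool,
      (sg (u p.1) * (if p.2 then 1 else c) / (1 + c)) *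
        (ω p - (if p.2 then μa p.1 else μb p.1))) := by
    ext ω
    simp only [Function.comp, Phi, WW, Fintype.sum_prod_type, Fintype.sum_bool, Finset.sum_div]
    refine Finset.sum_congr rfl fun i _ => ?_
    simp
    ring
  rw [e1, h]
  congr 2
  simp only [Fintype.sum_prod_type, Fintype.sum_bool, div_pow, mul_pow, sg_sq]
  simp
  ring

lemma g_law (m q : ℕ) (μa μb : Fin m → ℝ) (c : ℝ) (hc : 0 < c) :
    Measure.map (gFun μa μb c) (threshMeasure m q μa μb) =
      gaussianReal 0 ((m : ℝ) ^ 2 / q * ((1 + c ^ 2) / (1 + c) ^ 2)).toNNReal := by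
  have hprod := (indepFun_iff_map_prod_eq_prod_map_map (measurable_UU c).aemeasurable
    (measurable_WW c).aemeasurable).1 (UW_indep m q μa μb c)
  have : IsProbabilityMeasure
      ((threshMeasure m q μa μb).map (fun ω (i : Fin m) => UU c i ω)) :=
    Measure.isProbabilityMeasure_map (measurable_UU c).aemeasurable
  have hsk := (MeasurePreserving.id
      ((threshMeasure m q μa μb).map (fun ω (i : Fin m) => UU c i ω))).skew_product
    (μc := (threshMeasure m q μa μb).map (fun ω (i : Fin m) => WW c i ω))
    (measurable_Phi μa μb c) (ae_of_all _ fun u => Phi_law m q μa μb c hc u)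
  have h2 := (measurePreserving_snd.comp hsk).map_eq
  rw [← hprod, Measure.map_map (measurable_snd.comp hsk.measurable)
    ((measurable_UU c).prodMk (measurable_WW c))] at h2
  rw [← h2]
  congr 1
  ext ω
  exact gFun_eq μa μb c ω

lemma g_tail (m q : ℕ) (hq : 1 ≤ q) (hm : 1 ≤ m) (μa μb : Fin m → ℝ) (c : ℝ) (hc : 0 < c) :
    (threshMeasure m q μa μb).real
      {ω | (m / Real.sqrt q) * Real.log m < |gFun μa μb c ω|} ≤
      2 * Real.exp (-Real.log m ^ 2 / 2) := by
  have hq0 : (0 : ℝ) < q := by exact_mod_cast hq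
  have hm0 : (0 : ℝ) < m := by exact_mod_cast hm
  have hm1 : (1 : ℝ) ≤ m := by exact_mod_cast hm
  have hlog := Real.log_nonneg hm1
  set ε := (m / Real.sqrt q) * Real.log m with hε
  have hε0 : 0 ≤ ε := by positivity
  have hlaw := g_law m q μa μb c hc
  set V := ((m : ℝ) ^ 2 / q * ((1 + c ^ 2) / (1 + c) ^ 2)).toNNReal with hV
  have hlawn : Measure.map (fun ω => - gFun μa μb c ω) (threshMeasure m q μa μb) =
      gaussianReal 0 V := by
    have := (gaussianReal_neg ⟨(measurable_gFun μa μb c).aemeasurable, hlaw⟩).map_eq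
    simpa [Pi.neg_def] using this
  have hVle : (V : ℝ) ≤ (m : ℝ) ^ 2 / q := by
    rw [hV, Real.coe_toNNReal _ (by positivity)]
    refine mul_le_of_le_one_right (by positivity) ?_
    rw [div_le_one (by positivity)]
    nlinarith
  have key : ∀ X : ((Fin m × Bool) → ℝ) → ℝ, Measurable X →
      Measure.map X (threshMeasure m q μa μb) = gaussianReal 0 V →
      (threshMeasure m q μa μb).real {ω | ε ≤ X ω} ≤ Real.exp (-Real.log m ^ 2 / 2) := by
    intro X hX hXl
    have hs : HasSubgaussianMGF X (NNReal.mk ((m : ℝ) ^ 2 / q) (by positivity)) (threshMeasure m q μa μb) := by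
      constructor
      · intro t
        have := integrable_exp_mul_gaussianReal (μ := 0) (v := V) t
        rw [← hXl] at this
        exact this.comp_measurable hX
      · intro t
        rw [mgf_gaussianReal hXl]
        apply Real.exp_le_exp.2
        simp only [NNReal.coe_mk, zero_mul, zero_add]
        gcongr
    refine (hs.measure_ge_le hε0).trans (le_of_eq ?_)
    congr 1
    simp only [NNReal.coe_mk, hε, mul_pow, div_pow, Real.sq_sqrt hq0.le]
    field_simp
  have hg := measurable_gFun μa μb c
  calc _ ≤ (threshMeasure m q μa μb).real
        ({ω | ε ≤ gFun μa μb c ω} ∪ {ω | ε ≤ - gFun μa μb c ω}) := by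
        refine measureReal_mono ?_ (measure_ne_top _ _)
        intro ω hω
        rcases lt_abs.1 (show ε < |gFun μa μb c ω| from hω) with h | h
        · exact Or.inl h.le
        · exact Or.inr h.le
    _ ≤ _ := measureReal_union_le _ _
    _ ≤ _ := by
        have k1 := key _ hg hlaw
        have k2 := key (fun ω => - gFun μa μb c ω) hg.neg hlawn
        linarith

/-- in the thresholding allocation model, for every `c > 0` the random variable
`g(c)` is distributed as `N(0, (m²/q)(1+c²)/(1+c)²)`; consequently, with probability at least
`1 − 2 m⁶ exp(−(log m)²/2)`, simultaneously for all grid values `c = k/m³` (`k = 1, …, m⁶`),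
`|g(c)| ≤ (m/√q) log m`. -/
theorem stmt13 {m : ℕ} (μa μb : Fin m → ℝ)
    (hμa : ∀ i, μa i ∈ Set.Icc (0 : ℝ) 1) (hμb : ∀ i, μb i ∈ Set.Icc (0 : ℝ) 1)
    (q : ℕ) (hq : 1 ≤ q) :
    (∀ c : ℝ, 0 < c →
        Measure.map (gFun μa μb c) (threshMeasure m q μa μb) =
          gaussianReal 0 ((m : ℝ) ^ 2 / q * ((1 + c ^ 2) / (1 + c) ^ 2)).toNNReal) ∧
      ENNReal.ofReal (1 - 2 * m ^ 6 * Real.exp (-Real.log m ^ 2 / 2)) ≤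
        threshMeasure m q μa μb
          {ω | ∀ k : ℕ, 1 ≤ k → k ≤ m ^ 6 →
              |gFun μa μb ((k : ℝ) / (m : ℝ) ^ 3) ω| ≤ (m / Real.sqrt q) * Real.log m} := by
  refine ⟨fun c hc => g_law m q μa μb c hc, ?_⟩
  rcases Nat.eq_zero_or_pos m with hm | hm
  · have : {ω | ∀ k : ℕ, 1 ≤ k → k ≤ m ^ 6 →
        |gFun μa μb ((k : ℝ) / (m : ℝ) ^ 3) ω| ≤ (m / Real.sqrt q) * Real.log m} = Set.univ := by
      ext ω
      simp only [Set.mem_setOf_eq, Set.mem_univ, iff_true]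
      intro k hk hk2
      simp [hm] at hk2
      omega
    rw [this, measure_univ]
    simp [hm]
  · have hm0 : (0 : ℝ) < m := by exact_mod_cast hm
    set P := threshMeasure m q μa μb
    set S := {ω | ∀ k : ℕ, 1 ≤ k → k ≤ m ^ 6 →
        |gFun μa μb ((k : ℝ) / (m : ℝ) ^ 3) ω| ≤ (m / Real.sqrt q) * Real.log m} with hS
    have hSm : MeasurableSet S := by
      have : S = ⋂ k : ℕ, ⋂ _ : 1 ≤ k, ⋂ _ : k ≤ m ^ 6,
          {ω | |gFun μa μb ((k : ℝ) / (m : ℝ) ^ 3) ω| ≤ (m / Real.sqrt q) * Real.log m} := by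
        ext ω; simp [hS]
      rw [this]
      refine MeasurableSet.iInter fun k => MeasurableSet.iInter fun _ =>
        MeasurableSet.iInter fun _ => ?_
      exact measurableSet_le
        (continuous_abs.measurable.comp (measurable_gFun μa μb _)) measurable_const
    have hbad : P.real Sᶜ ≤ 2 * m ^ 6 * Real.exp (-Real.log m ^ 2 / 2) := by
      have hsub : Sᶜ ⊆ ⋃ k ∈ Finset.Icc 1 (m ^ 6),
          {ω | (m / Real.sqrt q) * Real.log m < |gFun μa μb ((k : ℝ) / (m : ℝ) ^ 3) ω|} := by
        intro ω hω
        simp only [hS, Set.mem_compl_iff, Set.mem_setOf_eq, not_forall, not_le] at hω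
        obtain ⟨k, h1, h2, h3⟩ := hω
        simp only [Set.mem_iUnion]
        exact ⟨k, Finset.mem_Icc.2 ⟨h1, h2⟩, h3⟩
      refine (measureReal_mono hsub (measure_ne_top _ _)).trans ((measureReal_biUnion_finset_le _ _).trans ?_)
      refine (Finset.sum_le_card_nsmul _ _ (2 * Real.exp (-Real.log m ^ 2 / 2))
        fun k hk => ?_).trans (le_of_eq ?_)
      · have hk1 : (0 : ℝ) < k := by exact_mod_cast (Finset.mem_Icc.1 hk).1
        exact g_tail m q hq hm μa μb _ (by positivity)
      · simp; ring
    rw [← ofReal_measureReal (μ := P) (s := S)]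
    apply ENNReal.ofReal_le_ofReal
    have := probReal_compl_eq_one_sub (μ := P) hSm
    linarith
end
end

section
/- Let Δ : ℕ → ℝ be a sequence with Δ(m) ≥ m^{1/4}(log m)² for all sufficiently large m and Δ(m)·(log m)/m → 0 as m → ∞, set q(m) = m·⌈15 (m^{3/2}/Δ(m)²) log m + (log m)²⌉, and for each m let μ^a, μ^b ∈ [0,1]^m be any utility profiles with OptEnvy ≤ −Δ(m). In the thresholding allocation model with q = q(m) (estimate variance m/q), the probability of the following event tends to 1 as m → ∞: there exists c in the grid C = {k/m³ : k = 1, …, m⁶} such that (−2/c + 1)·(m/√q)·log m ≤ h(c) ≤ (2c − 1)·(m/√q)·log m, where h(c) = (e'_a(c) − c·e'_b(c))/(1+c). -/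
open MeasureTheory ProbabilityTheory Real Filter
open scoped ENNReal NNReal Classical

noncomputable section

/-- `h(c) = (e'_a(c) − c e'_b(c))/(1+c)`. -/
def hFun {m : ℕ} (c : ℝ) (ω : (Fin m × Bool) → ℝ) : ℝ :=
  (eA' c ω - c * eB' c ω) / (1 + c)

lemma xSign_abs {m : ℕ} (c : ℝ) (ω : (Fin m × Bool) → ℝ) (i : Fin m) : |xSign c ω i| = 1 := by
  unfold xSign; split_ifs <;> simp

lemma hFun_eq {m : ℕ} (c : ℝ) (ω : (Fin m × Bool) → ℝ) :
    hFun c ω = -∑ i, xSign c ω i * ((ω (i, true) + c * ω (i, false)) / (1 + c)) := by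
  unfold hFun eA' eB'
  rw [Finset.mul_sum, ← Finset.sum_neg_distrib, ← Finset.sum_sub_distrib, Finset.sum_div,
    ← Finset.sum_neg_distrib]
  apply Finset.sum_congr rfl
  intro i _
  ring

lemma g_abs (a b c : ℝ) (hc : 0 ≤ c) (ha : |a| ≤ 2) (hb : |b| ≤ 2) :
    |(a + c * b) / (1 + c)| ≤ 2 := by
  rw [abs_div, abs_of_pos (by linarith : (0:ℝ) < 1 + c), div_le_iff₀ (by linarith)]
  calc |a + c * b| ≤ |a| + |c * b| := abs_add_le _ _
    _ = |a| + c * |b| := by rw [abs_mul, abs_of_nonneg hc]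
    _ ≤ _ := by nlinarith

lemma g_diff (a b c d : ℝ) (hc : 0 ≤ c) (hd : 0 ≤ d) (ha : |a| ≤ 2) (hb : |b| ≤ 2) :
    |(a + c * b) / (1 + c) - (a + (c + d) * b) / (1 + (c + d))| ≤ 4 * d := by
  have e : (a + c * b) / (1 + c) - (a + (c + d) * b) / (1 + (c + d))
      = (a - b) * (d / ((1 + c) * (1 + (c + d)))) := by
    have h1 : (1 + c) ≠ 0 := by linarith
    have h2 : (1 + (c + d)) ≠ 0 := by linarith
    field_simp
    ring
  have h1 : |a - b| ≤ 4 := by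
    rw [abs_le] at *
    constructor <;> linarith
  have h2 : d / ((1 + c) * (1 + (c + d))) ≤ d := by
    apply div_le_self hd
    nlinarith [mul_nonneg hc hd]
  have h3 : 0 ≤ d / ((1 + c) * (1 + (c + d))) := by positivity
  rw [e, abs_mul, abs_of_nonneg h3]
  calc _ ≤ 4 * d := by gcongr

lemma hFun_abs {m : ℕ} (c : ℝ) (hc : 0 ≤ c) (ω : (Fin m × Bool) → ℝ) (hv : ∀ p, |ω p| ≤ 2) :
    |hFun c ω| ≤ 2 * m := by
  rw [hFun_eq, abs_neg]
  refine (Finset.abs_sum_le_sum_abs _ _).trans ?_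
  calc _ ≤ ∑ i : Fin m, (2 : ℝ) := by
        apply Finset.sum_le_sum
        intro i _
        rw [abs_mul, xSign_abs, one_mul]
        exact g_abs _ _ _ hc (hv _) (hv _)
    _ = _ := by simp; ring

lemma hFun_step {m : ℕ} (c d : ℝ) (hc : 0 ≤ c) (hd : 0 ≤ d) (hdm : d * m ≤ 1 / 4)
    (ω : (Fin m × Bool) → ℝ) (hv : ∀ p, |ω p| ≤ 2)
    (hS : ∀ S : Finset (Fin m), S.card = 7 →
      ¬ ∀ i ∈ S, |ω (i, false) - c * ω (i, true)| ≤ 2 * d) :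
    hFun c ω - 25 ≤ hFun (c + d) ω := by
  set T : Finset (Fin m) := Finset.univ.filter
    (fun i => |ω (i, false) - c * ω (i, true)| ≤ 2 * d) with hT
  have hcard : T.card ≤ 6 := by
    by_contra hcon
    push Not at hcon
    obtain ⟨S, hST, hS7⟩ := Finset.exists_subset_card_eq (show 7 ≤ T.card by omega)
    refine hS S hS7 fun i hi => ?_
    have := hST hi
    rw [hT, Finset.mem_filter] at this
    exact this.2
  have hterm : ∀ i : Fin m, xSign (c + d) ω i * ((ω (i, true) + (c + d) * ω (i, false)) / (1 + (c + d)))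
      - xSign c ω i * ((ω (i, true) + c * ω (i, false)) / (1 + c))
      ≤ (if i ∈ T then 4 else 0) + 4 * d := by
    intro i
    by_cases hi : i ∈ T
    · rw [if_pos hi]
      have h1 := g_abs (ω (i, true)) (ω (i, false)) c hc (hv _) (hv _)
      have h2 := g_abs (ω (i, true)) (ω (i, false)) (c + d) (by linarith) (hv _) (hv _)
      have h1' : |xSign c ω i * ((ω (i, true) + c * ω (i, false)) / (1 + c))| ≤ 2 := by
        rw [abs_mul, xSign_abs, one_mul]; exact h1
      have h2' : |xSign (c + d) ω i * ((ω (i, true) + (c + d) * ω (i, false)) / (1 + (c + d)))| ≤ 2 := by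
        rw [abs_mul, xSign_abs, one_mul]; exact h2
      rw [abs_le] at h1' h2'
      linarith [h1'.1, h2'.2]
    · rw [if_neg hi]
      have hgt : 2 * d < |ω (i, false) - c * ω (i, true)| := by
        by_contra hcon
        exact hi (by rw [hT, Finset.mem_filter]; exact ⟨Finset.mem_univ _, not_lt.mp hcon⟩)
      have hx : xSign (c + d) ω i = xSign c ω i := by
        unfold xSign
        have ha := hv (i, true)
        rw [abs_le] at ha
        have e1 : d * ω (i, true) ≤ 2 * d := by nlinarith [ha.2]
        have e2 : -(2 * d) ≤ d * ω (i, true) := by nlinarith [ha.1]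
        rcases lt_abs.mp hgt with h | h
        · rw [if_neg, if_neg] <;> nlinarith
        · rw [if_pos, if_pos] <;> nlinarith
      rw [hx, ← mul_sub, zero_add]
      refine (le_abs_self _).trans ?_
      rw [abs_mul, xSign_abs, one_mul, abs_sub_comm]
      exact g_diff _ _ _ _ hc hd (hv _) (hv _)
  have hsum := Finset.sum_le_sum (fun i (_ : i ∈ Finset.univ) => hterm i)
  rw [Finset.sum_sub_distrib, Finset.sum_add_distrib] at hsum
  have e1 : ∑ i : Fin m, (if i ∈ T then (4 : ℝ) else 0) = 4 * T.card := by
    simp; ring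
  have e2 : ∑ i : Fin m, 4 * d = 4 * (d * m) := by
    simp; ring
  have hc6 : (T.card : ℝ) ≤ 6 := by exact_mod_cast hcard
  rw [e1, e2] at hsum
  rw [hFun_eq, hFun_eq]
  linarith

lemma det_exists {m : ℕ} (hm : 2 ≤ m) (ω : (Fin m × Bool) → ℝ) (hv : ∀ p, |ω p| ≤ 2)
    (L : ℝ) (hL : 30 ≤ L)
    (hS : ∀ k ∈ Finset.range (m ^ 6), ∀ S ∈ Finset.powersetCard 7 (Finset.univ : Finset (Fin m)),
      ¬ ∀ i ∈ S, |ω (i, false) - ((k : ℝ) / (m : ℝ) ^ 3) * ω (i, true)| ≤ 2 * (1 / (m : ℝ) ^ 3)) :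
    ∃ k : ℕ, 1 ≤ k ∧ k ≤ m ^ 6 ∧
      ((-2 / ((k : ℝ) / (m : ℝ) ^ 3) + 1) * L ≤ hFun ((k : ℝ) / (m : ℝ) ^ 3) ω ∧
        hFun ((k : ℝ) / (m : ℝ) ^ 3) ω ≤ (2 * ((k : ℝ) / (m : ℝ) ^ 3) - 1) * L) := by
  have hmR : (2 : ℝ) ≤ m := by exact_mod_cast hm
  have hm3 : (0 : ℝ) < (m : ℝ) ^ 3 := by positivity
  have hm3m : 4 * (m : ℝ) ≤ (m : ℝ) ^ 3 := by nlinarith [mul_self_nonneg ((m : ℝ) - 2)]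
  have hpos6 : 1 ≤ m ^ 6 := Nat.one_le_pow _ _ (by omega)
  have hex : ∃ k : ℕ, 1 ≤ k ∧ k ≤ m ^ 6 ∧
      hFun ((k : ℝ) / (m : ℝ) ^ 3) ω ≤ (2 * ((k : ℝ) / (m : ℝ) ^ 3) - 1) * L := by
    refine ⟨m ^ 6, hpos6, le_rfl, ?_⟩
    have e : ((m ^ 6 : ℕ) : ℝ) / (m : ℝ) ^ 3 = (m : ℝ) ^ 3 := by
      push_cast
      field_simp
    rw [e]
    have := (abs_le.mp (hFun_abs ((m : ℝ) ^ 3) hm3.le ω hv)).2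
    nlinarith
  obtain ⟨hk1, hk6, hku⟩ := Nat.find_spec hex
  set k := Nat.find hex with hk
  refine ⟨k, hk1, hk6, ?_, hku⟩
  rcases Nat.eq_or_lt_of_le hk1 with h1 | h1
  · rw [← h1]
    have e : -2 / (((1 : ℕ) : ℝ) / (m : ℝ) ^ 3) = -2 * (m : ℝ) ^ 3 := by
      push_cast
      field_simp
    rw [e]
    have := (abs_le.mp (hFun_abs (((1 : ℕ) : ℝ) / (m : ℝ) ^ 3) (by positivity) ω hv)).1
    nlinarith
  · obtain ⟨j, hj⟩ : ∃ j, k = j + 1 := ⟨k - 1, by omega⟩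
    have hmin := Nat.find_min hex (m := j) (by omega)
    have hj1 : 1 ≤ j := by omega
    have hj6 : j < m ^ 6 := by omega
    have hju : (2 * ((j : ℝ) / (m : ℝ) ^ 3) - 1) * L < hFun ((j : ℝ) / (m : ℝ) ^ 3) ω := by
      by_contra hcon
      exact hmin ⟨hj1, hj6.le, not_lt.mp hcon⟩
    have hdm : 1 / (m : ℝ) ^ 3 * m ≤ 1 / 4 := by
      rw [div_mul_eq_mul_div, one_mul, div_le_iff₀ hm3]; linarith
    have hstep := hFun_step ((j : ℝ) / (m : ℝ) ^ 3) (1 / (m : ℝ) ^ 3) (by positivity)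
      (by positivity) hdm ω hv (fun S hS7 => hS j (Finset.mem_range.mpr hj6) S
        (Finset.mem_powersetCard.mpr ⟨Finset.subset_univ _, hS7⟩))
    have e : (j : ℝ) / (m : ℝ) ^ 3 + 1 / (m : ℝ) ^ 3 = (k : ℝ) / (m : ℝ) ^ 3 := by
      rw [hj]; push_cast; ring
    rw [e] at hstep
    have hc0 : 0 < (k : ℝ) / (m : ℝ) ^ 3 := by
      have : (0 : ℝ) < k := by exact_mod_cast hk1
      positivity
    have hd : 1 / (m : ℝ) ^ 3 ≤ 1 / 8 := by
      apply one_div_le_one_div_of_le (by norm_num); nlinarith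
    set c := (k : ℝ) / (m : ℝ) ^ 3
    have ej : (j : ℝ) / (m : ℝ) ^ 3 = c - 1 / (m : ℝ) ^ 3 := by rw [← e]; ring
    rw [ej] at hju hstep
    have hcc : 2 ≤ c + 1 / c := by
      have : c + 1 / c - 2 = (c - 1) ^ 2 / c := by field_simp; ring
      have h0 : 0 ≤ (c - 1) ^ 2 / c := by positivity
      linarith
    have e2 : -2 / c = -2 * (1 / c) := by ring
    rw [e2]
    nlinarith [mul_nonneg (sub_nonneg.mpr hcc) (by linarith : 0 ≤ L), mul_nonneg (sub_nonneg.mpr hd) (by linarith : 0 ≤ L)]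

lemma gauss_interval (μ : ℝ) (N : ℕ) (hN : 0 < N) (s w : ℝ) (hw : 0 ≤ w) :
    gaussianReal μ (1 / (N : ℝ≥0)) {x | |x - s| ≤ w} ≤ ENNReal.ofReal (2 * w * √N) := by
  have hv : (1 / (N : ℝ≥0)) ≠ 0 := by positivity
  have hset : {x : ℝ | |x - s| ≤ w} = Set.Icc (s - w) (s + w) := by
    ext x
    simp only [Set.mem_setOf_eq, Set.mem_Icc, abs_le]
    constructor <;> rintro ⟨h1, h2⟩ <;> constructor <;> linarith
  rw [gaussianReal_apply _ hv, hset]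
  have hN' : (0 : ℝ) < N := by exact_mod_cast hN
  have hb : ∀ x, gaussianPDF μ (1 / (N : ℝ≥0)) x ≤ ENNReal.ofReal (√N) := by
    intro x
    rw [gaussianPDF]
    apply ENNReal.ofReal_le_ofReal
    rw [gaussianPDFReal]
    have h1 : rexp (-(x - μ) ^ 2 / (2 * ((1 / (N : ℝ≥0) : ℝ≥0) : ℝ))) ≤ 1 := by
      rw [Real.exp_le_one_iff]
      apply div_nonpos_of_nonpos_of_nonneg
      · nlinarith [sq_nonneg (x - μ)]
      · positivity
    have h2 : (√(2 * π * ((1 / (N : ℝ≥0) : ℝ≥0) : ℝ)))⁻¹ ≤ √N := by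
      rw [← Real.sqrt_inv]
      apply Real.sqrt_le_sqrt
      push_cast
      have hpi := Real.pi_gt_three
      rw [mul_one_div, inv_div, div_le_iff₀ (by positivity)]
      nlinarith
    calc _ ≤ √N * 1 := by gcongr
      _ = _ := mul_one _
  calc _ ≤ ∫⁻ x in Set.Icc (s - w) (s + w), ENNReal.ofReal (√N) := lintegral_mono hb
    _ = ENNReal.ofReal (√N) * ENNReal.ofReal ((s + w) - (s - w)) := by
        rw [setLIntegral_const, Real.volume_Icc]
    _ = _ := by
        rw [← ENNReal.ofReal_mul (by positivity)]
        congr 1; ring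

lemma gauss_tail (μ : ℝ) (hμ : μ ∈ Set.Icc (0 : ℝ) 1) (v : ℝ≥0) (ℓ : ℝ) (hℓ : 0 ≤ ℓ)
    (hv : (v : ℝ) * ℓ ^ 2 ≤ 1) :
    gaussianReal μ v {x | ¬ |x| ≤ 2} ≤ ENNReal.ofReal (2 * rexp (5 - 3 * ℓ)) := by
  have hsub : {x : ℝ | ¬ |x| ≤ 2} ⊆ {x | (2 : ℝ) ≤ id x} ∪ {x | id x ≤ (-2 : ℝ)} := by
    intro x hx
    simp only [Set.mem_setOf_eq, abs_le, not_and_or, not_le] at hx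
    rcases hx with h | h
    · right; exact h.le
    · left; exact h.le
  have h1 := measure_ge_le_exp_mul_mgf (μ := gaussianReal μ v) (X := id) (t := 3 * ℓ) 2
    (by positivity) (integrable_exp_mul_gaussianReal _)
  have h2 := measure_le_le_exp_mul_mgf (μ := gaussianReal μ v) (X := id) (t := -(3 * ℓ)) (-2)
    (by linarith) (integrable_exp_mul_gaussianReal _)
  rw [mgf_gaussianReal (μ := μ) (v := v) (by simp), ← Real.exp_add] at h1 h2
  have h1' : (gaussianReal μ v).real {x | (2 : ℝ) ≤ id x} ≤ rexp (5 - 3 * ℓ) := by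
    refine h1.trans (Real.exp_le_exp.mpr ?_)
    nlinarith [mul_le_mul_of_nonneg_right hμ.2 hℓ]
  have h2' : (gaussianReal μ v).real {x | id x ≤ (-2 : ℝ)} ≤ rexp (5 - 3 * ℓ) := by
    refine h2.trans (Real.exp_le_exp.mpr ?_)
    nlinarith [mul_nonneg hμ.1 hℓ]
  have h3 : (gaussianReal μ v).real {x : ℝ | ¬ |x| ≤ 2} ≤ 2 * rexp (5 - 3 * ℓ) := by
    refine (measureReal_mono hsub).trans ((measureReal_union_le _ _).trans ?_)
    linarith
  rw [← ofReal_measureReal]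
  exact ENNReal.ofReal_le_ofReal h3

lemma pi_box {m : ℕ} (ν : Fin m × Bool → Measure ℝ) [∀ p, IsProbabilityMeasure (ν p)]
    (ε : ℝ≥0∞) (c w : ℝ) (hε : ∀ p s, ν p {x | |x - s| ≤ w} ≤ ε) (S : Finset (Fin m)) :
    Measure.pi ν {ω | ∀ i ∈ S, |ω (i, false) - c * ω (i, true)| ≤ w} ≤ ε ^ S.card := by
  set P : Fin m × Bool → Prop := fun p => p.2 = true with hP
  have hmp := measurePreserving_piEquivPiSubtypeProd ν P
  set E : Set (({p // P p} → ℝ) × ({p // ¬ P p} → ℝ)) :=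
    {z | ∀ i ∈ S, |z.2 ⟨(i, false), by simp [hP]⟩ - c * z.1 ⟨(i, true), by simp [hP]⟩| ≤ w} with hE
  have hEm : MeasurableSet E := by
    have : E = ⋂ i ∈ S, {z | |z.2 ⟨(i, false), by simp [hP]⟩ - c * z.1 ⟨(i, true), by simp [hP]⟩| ≤ w} := by
      ext z; simp [hE]
    rw [this]
    refine Finset.measurableSet_biInter _ fun i _ => ?_
    apply measurableSet_le _ measurable_const
    fun_prop
  have hpre : {ω : Fin m × Bool → ℝ | ∀ i ∈ S, |ω (i, false) - c * ω (i, true)| ≤ w}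
      = (MeasurableEquiv.piEquivPiSubtypeProd (fun _ => ℝ) P) ⁻¹' E := by
    ext ω
    rfl
  rw [hpre, hmp.measure_preimage hEm.nullMeasurableSet, Measure.prod_apply hEm]
  have key : ∀ a : {p // P p} → ℝ,
      (Measure.pi fun i : {p // ¬ P p} => ν i) (Prod.mk a ⁻¹' E) ≤ ε ^ S.card := by
    intro a
    set B : {p // ¬ P p} → Set ℝ := fun p =>
      if p.1.1 ∈ S then {x | |x - c * a ⟨(p.1.1, true), by simp [hP]⟩| ≤ w} else Set.univ with hB
    have hsub : Prod.mk a ⁻¹' E ⊆ Set.univ.pi B := by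
      rintro b hb ⟨⟨i, t⟩, hp⟩ _
      have ht : t = false := by simpa [hP] using hp
      subst ht
      simp only [hB]
      split_ifs with hi
      · exact hb i hi
      · trivial
    refine (measure_mono hsub).trans ?_
    rw [Measure.pi_pi]
    calc ∏ p : {p // ¬ P p}, ν p (B p)
        ≤ ∏ p : {p // ¬ P p}, (if p.1.1 ∈ S then ε else 1) := by
          apply Finset.prod_le_prod'
          intro p _
          simp only [hB]
          split_ifs
          · exact hε _ _
          · exact prob_le_one
      _ = ∏ i : Fin m, (if i ∈ S then ε else 1) := by
          refine Fintype.prod_bijective (fun p : {p // ¬ P p} => p.1.1) ⟨?_, ?_⟩ _ _ (fun _ => rfl)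
          · rintro ⟨⟨i, t⟩, hp⟩ ⟨⟨j, u⟩, hq⟩ h
            have ht : t = false := by simpa [hP] using hp
            have hu : u = false := by simpa [hP] using hq
            subst ht hu
            simp only at h
            subst h
            rfl
          · intro i
            exact ⟨⟨(i, false), by simp [hP]⟩, rfl⟩
      _ = ε ^ S.card := by
          rw [Finset.prod_ite_mem, Finset.univ_inter, Finset.prod_const]
  calc _ ≤ ∫⁻ a, ε ^ S.card ∂(Measure.pi fun i : {p // P p} => ν i) := lintegral_mono key
    _ = _ := by simp

lemma bad_prob (m N : ℕ) (hm : 1 ≤ m) (hN : 0 < N) (hNm : N ≤ m) (hlog : Real.log m ^ 2 ≤ N)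
    (μa μb : Fin m → ℝ) (hμa : ∀ i, μa i ∈ Set.Icc (0 : ℝ) 1) (hμb : ∀ i, μb i ∈ Set.Icc (0 : ℝ) 1) :
    threshMeasure m (m * N) μa μb
      ((⋃ p : Fin m × Bool, {ω | ¬ |ω p| ≤ 2}) ∪
        ⋃ k ∈ Finset.range (m ^ 6), ⋃ S ∈ Finset.powersetCard 7 (Finset.univ : Finset (Fin m)),
          {ω | ∀ i ∈ S, |ω (i, false) - ((k : ℝ) / (m : ℝ) ^ 3) * ω (i, true)|
            ≤ 2 * (1 / (m : ℝ) ^ 3)})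
      ≤ ENNReal.ofReal ((4 * rexp 5 + 4 ^ 7) / m) := by
  have hmR : (1 : ℝ) ≤ m := by exact_mod_cast hm
  have hm0 : (0 : ℝ) < m := by linarith
  have hNR : (0 : ℝ) < N := by exact_mod_cast hN
  have hvar : (m : ℝ≥0) / ((m * N : ℕ) : ℝ≥0) = 1 / (N : ℝ≥0) := by
    have : (m : ℝ≥0) ≠ 0 := by exact_mod_cast (by omega : m ≠ 0)
    push_cast
    field_simp
  unfold threshMeasure
  rw [hvar]
  set ν : Fin m × Bool → Measure ℝ := fun p =>
    gaussianReal (if p.2 then μa p.1 else μb p.1) (1 / (N : ℝ≥0)) with hν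
  haveI : ∀ p, IsProbabilityMeasure (ν p) := fun p => by rw [hν]; infer_instance
  have hA : Measure.pi ν (⋃ p : Fin m × Bool, {ω | ¬ |ω p| ≤ 2})
      ≤ ENNReal.ofReal (4 * rexp 5 / m) := by
    have hone : ∀ p : Fin m × Bool, Measure.pi ν {ω | ¬ |ω p| ≤ 2}
        ≤ ENNReal.ofReal (2 * rexp (5 - 3 * Real.log m)) := by
      intro p
      have hms : MeasurableSet {x : ℝ | ¬ |x| ≤ 2} :=
        (measurableSet_le (f := fun x : ℝ => |x|) (g := fun _ => 2) (by fun_prop) measurable_const).compl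
      have h := (measurePreserving_eval ν p).measure_preimage hms.nullMeasurableSet
      have h' : Measure.pi ν {ω | ¬ |ω p| ≤ 2} = ν p {x : ℝ | ¬ |x| ≤ 2} := h
      rw [h', hν]
      apply gauss_tail _ _ _ _ (Real.log_nonneg hmR)
      · push_cast
        rw [div_mul_eq_mul_div, one_mul, div_le_one hNR]
        exact hlog
      · split_ifs
        · exact hμa _
        · exact hμb _
    calc _ ≤ ∑ p : Fin m × Bool, Measure.pi ν {ω | ¬ |ω p| ≤ 2} := measure_iUnion_fintype_le _ _
      _ ≤ ∑ p : Fin m × Bool, ENNReal.ofReal (2 * rexp (5 - 3 * Real.log m)) :=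
          Finset.sum_le_sum fun p _ => hone p
      _ = ENNReal.ofReal ((m * 2 : ℕ) * (2 * rexp (5 - 3 * Real.log m))) := by
          rw [ENNReal.ofReal_mul (p := ((m * 2 : ℕ) : ℝ)) (by positivity), ENNReal.ofReal_natCast]
          simp
      _ ≤ _ := by
          apply ENNReal.ofReal_le_ofReal
          have e : rexp (5 - 3 * Real.log m) = rexp 5 / (m : ℝ) ^ 3 := by
            rw [Real.exp_sub]
            congr 1
            rw [show 3 * Real.log m = ((3 : ℕ) : ℝ) * Real.log m by norm_num, Real.exp_nat_mul,
              Real.exp_log hm0]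
          rw [e]
          push_cast
          have : (m : ℝ) * 2 * (2 * (rexp 5 / (m : ℝ) ^ 3)) = 4 * rexp 5 / (m : ℝ) ^ 2 := by
            field_simp; ring
          rw [this]
          gcongr
          nlinarith
  have hB : Measure.pi ν (⋃ k ∈ Finset.range (m ^ 6),
      ⋃ S ∈ Finset.powersetCard 7 (Finset.univ : Finset (Fin m)),
          {ω | ∀ i ∈ S, |ω (i, false) - ((k : ℝ) / (m : ℝ) ^ 3) * ω (i, true)|
            ≤ 2 * (1 / (m : ℝ) ^ 3)}) ≤ ENNReal.ofReal (4 ^ 7 / m) := by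
    have hε : ∀ p s, ν p {x | |x - s| ≤ 2 * (1 / (m : ℝ) ^ 3)} ≤ ENNReal.ofReal (4 / (m : ℝ) ^ 2) := by
      intro p s
      refine (gauss_interval _ N hN s _ (by positivity)).trans (ENNReal.ofReal_le_ofReal ?_)
      have hsq : √(N : ℝ) ≤ m := by
        rw [Real.sqrt_le_left hm0.le]
        have : (N : ℝ) ≤ m := by exact_mod_cast hNm
        nlinarith
      calc 2 * (2 * (1 / (m : ℝ) ^ 3)) * √N ≤ 2 * (2 * (1 / (m : ℝ) ^ 3)) * m := by gcongr
        _ = _ := by field_simp; ring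
    have hbox := fun (c : ℝ) => pi_box ν _ c _ hε
    calc _ ≤ ∑ k ∈ Finset.range (m ^ 6),
        ∑ S ∈ Finset.powersetCard 7 (Finset.univ : Finset (Fin m)),
          ENNReal.ofReal (4 / (m : ℝ) ^ 2) ^ 7 := by
          refine (measure_biUnion_finset_le _ _).trans (Finset.sum_le_sum fun k _ => ?_)
          refine (measure_biUnion_finset_le _ _).trans (Finset.sum_le_sum fun S hS => ?_)
          have := hbox ((k : ℝ) / (m : ℝ) ^ 3) S
          rwa [(Finset.mem_powersetCard.mp hS).2] at this
      _ = ENNReal.ofReal ((m ^ 6 : ℕ) * ((m.choose 7 : ℕ) * (4 / (m : ℝ) ^ 2) ^ 7)) := by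
          rw [ENNReal.ofReal_mul (by positivity), ENNReal.ofReal_mul (by positivity),
            ENNReal.ofReal_natCast, ENNReal.ofReal_natCast, ENNReal.ofReal_pow (by positivity)]
          simp [Finset.sum_const, Finset.card_powersetCard]
      _ ≤ _ := by
          apply ENNReal.ofReal_le_ofReal
          have hch : ((m.choose 7 : ℕ) : ℝ) ≤ (m : ℝ) ^ 7 := by exact_mod_cast Nat.choose_le_pow m 7
          calc _ ≤ ((m ^ 6 : ℕ) : ℝ) * ((m : ℝ) ^ 7 * (4 / (m : ℝ) ^ 2) ^ 7) := by gcongr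
            _ = _ := by push_cast; field_simp
  refine (measure_union_le _ _).trans ((add_le_add hA hB).trans ?_)
  rw [← ENNReal.ofReal_add (by positivity) (by positivity), add_div]

lemma N_le (Δ : ℕ → ℝ)
    (hΔ1 : ∀ᶠ m : ℕ in atTop, (m : ℝ) ^ ((1 : ℝ) / 4) * Real.log m ^ 2 ≤ Δ m) :
    ∀ᶠ m : ℕ in atTop, 30 ≤ Real.log m ∧
      ⌈15 * ((m : ℝ) ^ ((3 : ℝ) / 2) / Δ m ^ 2) * Real.log m + Real.log m ^ 2⌉₊ ≤ m := by
  have hlog : ∀ᶠ m : ℕ in atTop, 30 ≤ Real.log m :=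
    (Real.tendsto_log_atTop.comp tendsto_natCast_atTop_atTop).eventually_ge_atTop 30
  have hlo : ∀ᶠ m : ℕ in atTop, ‖Real.log (m : ℝ) ^ 2‖ ≤ 1 / 4 * ‖id (m : ℝ)‖ :=
    tendsto_natCast_atTop_atTop.eventually
      ((Real.isLittleO_pow_log_id_atTop (n := 2)).def (by norm_num : (0:ℝ) < 1 / 4))
  filter_upwards [hΔ1, hlog, hlo, eventually_ge_atTop 1] with m h1 h2 h3 hm
  refine ⟨h2, ?_⟩
  have hm0 : (0 : ℝ) < m := by exact_mod_cast hm
  rw [Real.norm_of_nonneg (by positivity), id, Real.norm_of_nonneg hm0.le] at h3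
  set ℓ := Real.log m
  have hD : (m : ℝ) ^ ((1 : ℝ) / 2) * ℓ ^ 4 ≤ Δ m ^ 2 := by
    have e : (m : ℝ) ^ ((1 : ℝ) / 2) * ℓ ^ 4 = ((m : ℝ) ^ ((1 : ℝ) / 4) * ℓ ^ 2) ^ 2 := by
      rw [mul_pow, ← Real.rpow_natCast ((m : ℝ) ^ ((1 : ℝ) / 4)), ← Real.rpow_mul hm0.le]
      rw [← pow_mul, show (1 : ℝ) / 4 * ((2 : ℕ) : ℝ) = 1 / 2 by norm_num]
    rw [e]
    apply pow_le_pow_left₀ (by positivity) h1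
  have hp : (0 : ℝ) < (m : ℝ) ^ ((1 : ℝ) / 2) * ℓ ^ 4 := by positivity
  have hr : (m : ℝ) ^ ((3 : ℝ) / 2) / Δ m ^ 2 ≤ m / ℓ ^ 4 := by
    calc _ ≤ (m : ℝ) ^ ((3 : ℝ) / 2) / ((m : ℝ) ^ ((1 : ℝ) / 2) * ℓ ^ 4) := by gcongr
      _ = _ := by
        have : (m : ℝ) ^ ((3 : ℝ) / 2) = m * (m : ℝ) ^ ((1 : ℝ) / 2) := by
          rw [← Real.rpow_one_add' hm0.le (by norm_num)]; norm_num
        rw [this]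
        field_simp
  have hr2 : 15 * ((m : ℝ) ^ ((3 : ℝ) / 2) / Δ m ^ 2) * ℓ ≤ m / 2 := by
    calc _ ≤ 15 * (m / ℓ ^ 4) * ℓ := by gcongr
      _ = m * (15 / ℓ ^ 3) := by field_simp
      _ ≤ m * (1 / 2) := by
        apply mul_le_mul_of_nonneg_left _ hm0.le
        rw [div_le_div_iff₀ (by positivity) (by norm_num)]
        nlinarith [pow_le_pow_left₀ (by norm_num : (0:ℝ) ≤ 30) h2 3]
      _ = _ := by ring
  apply Nat.ceil_le.mpr
  linarith

/-- in the thresholding allocation model with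
`q(m) = m ⌈15 (m^{3/2}/Δ(m)²) log m + (log m)²⌉` and profiles with `OptEnvy ≤ -Δ(m)`, the
probability that some grid value `c = k/m³` (`k = 1, …, m⁶`) satisfies
`(−2/c + 1)(m/√q) log m ≤ h(c) ≤ (2c − 1)(m/√q) log m` tends to `1`. -/
theorem stmt14 (Δ : ℕ → ℝ)
    (hΔ1 : ∀ᶠ m : ℕ in atTop, (m : ℝ) ^ ((1 : ℝ) / 4) * Real.log m ^ 2 ≤ Δ m)
    (hΔ2 : Tendsto (fun m : ℕ => Δ m * Real.log m / m) atTop (nhds 0))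
    (q : ℕ → ℕ)
    (hq : ∀ m : ℕ,
      q m = m * ⌈15 * ((m : ℝ) ^ ((3 : ℝ) / 2) / Δ m ^ 2) * Real.log m + Real.log m ^ 2⌉₊)
    (μa μb : (m : ℕ) → Fin m → ℝ)
    (hμa : ∀ m i, μa m i ∈ Set.Icc (0 : ℝ) 1) (hμb : ∀ m i, μb m i ∈ Set.Icc (0 : ℝ) 1)
    (hopt : ∀ m : ℕ, optEnvy (μa m) (μb m) ≤ -Δ m) :
    Tendsto (fun m : ℕ =>
        (threshMeasure m (q m) (μa m) (μb m)
            {ω | ∃ k : ℕ, 1 ≤ k ∧ k ≤ m ^ 6 ∧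
                ((-2 / ((k : ℝ) / (m : ℝ) ^ 3) + 1) * ((m : ℝ) / Real.sqrt (q m)) *
                    Real.log m ≤ hFun ((k : ℝ) / (m : ℝ) ^ 3) ω ∧
                  hFun ((k : ℝ) / (m : ℝ) ^ 3) ω ≤
                    (2 * ((k : ℝ) / (m : ℝ) ^ 3) - 1) * ((m : ℝ) / Real.sqrt (q m)) *
                      Real.log m)}).toReal)
      atTop (nhds 1) := by
  have hNev := N_le Δ hΔ1
  have hlim : Tendsto (fun m : ℕ => 1 - (4 * rexp 5 + 4 ^ 7) / (m : ℝ)) atTop (nhds 1) := by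
    have := (tendsto_const_div_atTop_nhds_zero_nat (4 * rexp 5 + 4 ^ 7)).const_sub 1
    simpa using this
  have hprob : ∀ m, IsProbabilityMeasure (threshMeasure m (q m) (μa m) (μb m)) := fun m => by
    unfold threshMeasure; infer_instance
  refine tendsto_of_tendsto_of_tendsto_of_le_of_le' hlim tendsto_const_nhds ?_ ?_
  · filter_upwards [hNev, eventually_ge_atTop 2] with m hm hm2
    obtain ⟨hl, hNm⟩ := hm
    have hqm := hq m
    have hlN : Real.log m ^ 2 ≤
        (⌈15 * ((m : ℝ) ^ ((3 : ℝ) / 2) / Δ m ^ 2) * Real.log m + Real.log m ^ 2⌉₊ : ℝ) := by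
      refine le_trans ?_ (Nat.le_ceil _)
      have : 0 ≤ 15 * ((m : ℝ) ^ ((3 : ℝ) / 2) / Δ m ^ 2) * Real.log m := by positivity
      linarith
    set N := ⌈15 * ((m : ℝ) ^ ((3 : ℝ) / 2) / Δ m ^ 2) * Real.log m + Real.log m ^ 2⌉₊
    have hN0 : 0 < N := by
      have : (0 : ℝ) < N := by nlinarith
      exact_mod_cast this
    have hm0 : (0 : ℝ) < m := by exact_mod_cast (by omega : 0 < m)
    have hL : 30 ≤ (m : ℝ) / Real.sqrt (q m) * Real.log m := by
      have hq0 : (0 : ℝ) < q m := by rw [hqm]; exact_mod_cast Nat.mul_pos (by omega) hN0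
      have h1 : 1 ≤ (m : ℝ) / Real.sqrt (q m) := by
        rw [one_le_div (Real.sqrt_pos.mpr hq0), Real.sqrt_le_left hm0.le, hqm]
        have : (N : ℝ) ≤ m := by exact_mod_cast hNm
        push_cast
        nlinarith
      nlinarith
    have hbad := bad_prob m N (by omega) hN0 hNm hlN (μa m) (μb m) (hμa m) (hμb m)
    rw [← hqm] at hbad
    have := hprob m
    set P := threshMeasure m (q m) (μa m) (μb m)
    set G : Set ((Fin m × Bool) → ℝ) := _
    change _ ≤ (P G).toReal
    set B : Set ((Fin m × Bool) → ℝ) := _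
    change P B ≤ _ at hbad
    have hcov : (Set.univ : Set ((Fin m × Bool) → ℝ)) ⊆ G ∪ B := by
      intro ω _
      by_cases hB : ω ∈ B
      · exact Or.inr hB
      · left
        have hB' : ω ∉ ((⋃ p : Fin m × Bool, {ω : (Fin m × Bool) → ℝ | ¬ |ω p| ≤ 2}) ∪
          ⋃ k ∈ Finset.range (m ^ 6), ⋃ S ∈ Finset.powersetCard 7 (Finset.univ : Finset (Fin m)),
          {ω : (Fin m × Bool) → ℝ | ∀ i ∈ S, |ω (i, false) - ((k : ℝ) / (m : ℝ) ^ 3) * ω (i, true)|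
            ≤ 2 * (1 / (m : ℝ) ^ 3)}) := hB
        rw [Set.mem_union, not_or] at hB'
        obtain ⟨hB1, hB2⟩ := hB'
        have hv : ∀ p, |ω p| ≤ 2 := by
          intro p
          by_contra hcon
          exact hB1 (Set.mem_iUnion.mpr ⟨p, hcon⟩)
        obtain ⟨k, hk1, hk2, hk3, hk4⟩ := det_exists hm2 ω hv _ hL (fun k hk S hS hcon =>
          hB2 (Set.mem_iUnion₂.mpr ⟨k, hk, Set.mem_iUnion₂.mpr ⟨S, hS, hcon⟩⟩))
        refine ⟨k, hk1, hk2, ?_, ?_⟩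
        · rw [mul_assoc]; exact hk3
        · rw [mul_assoc]; exact hk4
    have h1 : 1 ≤ P.real G + P.real B := by
      have := (measureReal_mono (μ := P) hcov).trans (measureReal_union_le G B)
      simpa using this
    have h2 : P.real B ≤ (4 * rexp 5 + 4 ^ 7) / m :=
      ENNReal.toReal_le_of_le_ofReal (by positivity) hbad
    have h3 : P.real G = (P G).toReal := rfl
    linarith
  · filter_upwards with m
    have := hprob m
    exact measureReal_le_one (μ := threshMeasure m (q m) (μa m) (μb m))
end
end

section
/- Let Δ : ℕ → ℝ be a sequence with Δ(m) ≥ m^{1/4}(log m)² for all sufficiently large m and Δ(m)·(log m)/m → 0 as m → ∞, set q(m) = m·⌈15 (m^{3/2}/Δ(m)²) log m + (log m)²⌉, and for each m let μ^a, μ^b ∈ [0,1]^m be any utility profiles. In the thresholding allocation model with q = q(m) (estimate variance m/q), the probability of the following event tends to 1 as m → ∞: for every pair of consecutive grid points c₁ and c₂ = c₁ + 1/m³ in C = {k/m³ : k = 1, …, m⁶}, the number of items i with x_i(c₁) ≠ x_i(c₂) is at most log m. -/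
open MeasureTheory ProbabilityTheory Real Filter
open scoped ENNReal NNReal Classical

noncomputable section

/-- The wedge between the lines of slopes `c₁` and `c₂`. -/
def wedge (c₁ c₂ : ℝ) : Set (ℝ × ℝ) :=
  {p | min (c₁ * p.1) (c₂ * p.1) ≤ p.2 ∧ p.2 ≤ max (c₁ * p.1) (c₂ * p.1)}

lemma measurableSet_wedge (c₁ c₂ : ℝ) : MeasurableSet (wedge c₁ c₂) := by
  have h1 : MeasurableSet {p : ℝ × ℝ | min (c₁ * p.1) (c₂ * p.1) ≤ p.2} :=
    measurableSet_le (by fun_prop) (by fun_prop)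
  have h2 : MeasurableSet {p : ℝ × ℝ | p.2 ≤ max (c₁ * p.1) (c₂ * p.1)} :=
    measurableSet_le (by fun_prop) (by fun_prop)
  exact h1.inter h2

lemma mem_wedge_of_ne {m : ℕ} (c₁ c₂ : ℝ) (ω : (Fin m × Bool) → ℝ) (i : Fin m)
    (h : xSign c₁ ω i ≠ xSign c₂ ω i) : (ω (i, true), ω (i, false)) ∈ wedge c₁ c₂ := by
  unfold xSign at h
  simp only [wedge, Set.mem_ofPred_eq, min_le_iff, le_max_iff]
  by_cases h1 : 0 < c₁ * ω (i, true) - ω (i, false) <;>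
  by_cases h2 : 0 < c₂ * ω (i, true) - ω (i, false) <;> simp [h1, h2] at h
  · constructor
    · right; linarith
    · left; linarith
  · constructor
    · left; linarith
    · right; linarith

lemma gaussian_Icc_le (μ : ℝ) (v : ℝ≥0) (hv : v ≠ 0) (M : ℝ) (hM : 0 < M)
    (hvM : 1 ≤ M ^ 2 * v) (a b : ℝ) :
    gaussianReal μ v (Set.Icc a b) ≤ ENNReal.ofReal (M / 2) * ENNReal.ofReal (b - a) := by
  rw [gaussianReal_apply μ hv, ← Real.volume_Icc, ← setLIntegral_const]
  apply lintegral_mono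
  intro x
  unfold gaussianPDF
  apply ENNReal.ofReal_le_ofReal
  unfold gaussianPDFReal
  have hv0 : (0 : ℝ) < v := by positivity
  have h1 : rexp (-(x - μ) ^ 2 / (2 * v)) ≤ 1 := by
    apply Real.exp_le_one_iff.mpr
    apply div_nonpos_of_nonpos_of_nonneg
    · nlinarith [sq_nonneg (x - μ)]
    · positivity
  have h2 : (√(2 * π * v))⁻¹ ≤ M / 2 := by
    rw [inv_le_comm₀ (by positivity) (by positivity)]
    apply Real.le_sqrt_of_sq_le
    rw [inv_pow, inv_le_iff_one_le_mul₀ (by positivity)]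
    nlinarith [Real.pi_gt_three, mul_pos (pow_pos hM 2) hv0]
  calc _ ≤ (M / 2) * 1 := by gcongr
    _ = _ := by ring

lemma gaussian_abs_le (μ : ℝ) (v : ℝ≥0) (hμ : μ ∈ Set.Icc (0 : ℝ) 1) (hv : v ≤ 1) :
    ∫⁻ x, ENNReal.ofReal |x| ∂(gaussianReal μ v) ≤ ENNReal.ofReal 2 := by
  have hL : MemLp id 2 (gaussianReal μ v) := memLp_id_gaussianReal 2
  have hsq : Integrable (fun x : ℝ => x ^ 2) (gaussianReal μ v) := hL.integrable_sq
  have hab : Integrable (fun x : ℝ => |x|) (gaussianReal μ v) :=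
    (hL.integrable (by norm_num)).abs
  rw [← ofReal_integral_eq_lintegral_ofReal hab (ae_of_all _ fun x => abs_nonneg x)]
  apply ENNReal.ofReal_le_ofReal
  have hvar := variance_eq_sub hL
  rw [variance_id_gaussianReal] at hvar
  simp only [Pi.pow_apply, id_eq, integral_id_gaussianReal] at hvar
  have hv' : (v : ℝ) ≤ 1 := by exact_mod_cast hv
  have h2 : ∫ x, x ^ 2 ∂(gaussianReal μ v) ≤ 2 := by
    have : μ ^ 2 ≤ 1 := by nlinarith [hμ.1, hμ.2]
    linarith
  calc ∫ x, |x| ∂(gaussianReal μ v) ≤ ∫ x, (1 + x ^ 2 / 2) ∂(gaussianReal μ v) := by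
        apply integral_mono hab ((integrable_const 1).add (hsq.div_const 2))
        intro x
        simp only [Pi.add_apply]
        nlinarith [sq_abs x, sq_nonneg (|x| - 1), abs_nonneg x]
    _ = 1 + (∫ x, x ^ 2 ∂(gaussianReal μ v)) / 2 := by
        rw [integral_add (integrable_const 1) (hsq.div_const 2), integral_div]; simp
    _ ≤ 2 := by linarith

lemma wedge_le (μ ν : ℝ) (v : ℝ≥0) (hμ : μ ∈ Set.Icc (0 : ℝ) 1) (hv0 : v ≠ 0) (hv : v ≤ 1)
    (M : ℝ) (hM : 0 < M) (hvM : 1 ≤ M ^ 2 * v) (c₁ c₂ : ℝ) (hc : c₂ - c₁ = 1 / M ^ 3) :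
    ((gaussianReal μ v).prod (gaussianReal ν v)) (wedge c₁ c₂) ≤ ENNReal.ofReal (1 / M ^ 2) := by
  rw [Measure.prod_apply (measurableSet_wedge c₁ c₂)]
  have key : ∀ x : ℝ, gaussianReal ν v (Prod.mk x ⁻¹' wedge c₁ c₂) ≤
      ENNReal.ofReal (1 / (2 * M ^ 2)) * ENNReal.ofReal |x| := by
    intro x
    have : (Prod.mk x ⁻¹' wedge c₁ c₂) =
        Set.Icc (min (c₁ * x) (c₂ * x)) (max (c₁ * x) (c₂ * x)) := rfl
    rw [this]
    refine (gaussian_Icc_le ν v hv0 M hM hvM _ _).trans ?_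
    rw [max_sub_min_eq_abs, ← sub_mul, hc, abs_mul, abs_of_pos (by positivity),
      ← ENNReal.ofReal_mul (by positivity), ← ENNReal.ofReal_mul (by positivity)]
    apply ENNReal.ofReal_le_ofReal
    apply le_of_eq
    field_simp
  calc _ ≤ ∫⁻ x, ENNReal.ofReal (1 / (2 * M ^ 2)) * ENNReal.ofReal |x| ∂(gaussianReal μ v) :=
        lintegral_mono key
    _ = ENNReal.ofReal (1 / (2 * M ^ 2)) * ∫⁻ x, ENNReal.ofReal |x| ∂(gaussianReal μ v) := by
        rw [lintegral_const_mul _ (by fun_prop)]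
    _ ≤ ENNReal.ofReal (1 / (2 * M ^ 2)) * ENNReal.ofReal 2 := by
        gcongr; exact gaussian_abs_le μ v hμ hv
    _ = _ := by
        rw [← ENNReal.ofReal_mul (by positivity)]; congr 1; field_simp

/-- Regrouping of the pairs of coordinates. -/
def regroup (m : ℕ) (w : Fin m → ℝ × ℝ) : (Fin m × Bool) → ℝ :=
  fun p => if p.2 then (w p.1).1 else (w p.1).2

lemma measurable_regroup (m : ℕ) : Measurable (regroup m) := by
  apply measurable_pi_lambda
  rintro ⟨i, b⟩
  cases b <;> simp only [regroup] <;> simp <;> fun_prop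

lemma threshMeasure_eq (m q : ℕ) (μa μb : Fin m → ℝ) :
    threshMeasure m q μa μb = (Measure.pi fun i =>
      (gaussianReal (μa i) ((m : ℝ≥0) / (q : ℝ≥0))).prod
        (gaussianReal (μb i) ((m : ℝ≥0) / (q : ℝ≥0)))).map (regroup m) := by
  unfold threshMeasure
  apply Measure.pi_eq
  intro s hs
  rw [Measure.map_apply (measurable_regroup m) (MeasurableSet.univ_pi hs)]
  have : regroup m ⁻¹' Set.univ.pi s =
      Set.univ.pi (fun i : Fin m => s (i, true) ×ˢ s (i, false)) := by
    ext w
    simp [regroup, Set.mem_pi, Prod.forall]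
    exact ⟨fun h i => ⟨(h i).2, (h i).1⟩, fun h i => ⟨(h i).2, (h i).1⟩⟩
  rw [this, Measure.pi_pi, Fintype.prod_prod_type]
  simp [Measure.prod_prod]

lemma inter_le (m q : ℕ) (μa μb : Fin m → ℝ) (hμa : ∀ i, μa i ∈ Set.Icc (0 : ℝ) 1)
    (hv0 : (m : ℝ≥0) / (q : ℝ≥0) ≠ 0) (hv : (m : ℝ≥0) / (q : ℝ≥0) ≤ 1)
    (M : ℝ) (hM : 0 < M) (hvM : 1 ≤ M ^ 2 * (((m : ℝ≥0) / (q : ℝ≥0) : ℝ≥0) : ℝ))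
    (c₁ c₂ : ℝ) (hc : c₂ - c₁ = 1 / M ^ 3) (S : Finset (Fin m)) :
    threshMeasure m q μa μb {ω | ∀ i ∈ S, xSign c₁ ω i ≠ xSign c₂ ω i} ≤
      ENNReal.ofReal (1 / M ^ 2) ^ S.card := by
  have hmeas : MeasurableSet
      {ω : (Fin m × Bool) → ℝ | ∀ i ∈ S, (ω (i, true), ω (i, false)) ∈ wedge c₁ c₂} := by
    have : {ω : (Fin m × Bool) → ℝ | ∀ i ∈ S, (ω (i, true), ω (i, false)) ∈ wedge c₁ c₂} =
      ⋂ i ∈ S, (fun ω : (Fin m × Bool) → ℝ => (ω (i, true), ω (i, false))) ⁻¹' wedge c₁ c₂ := by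
      ext; simp
    rw [this]
    refine Finset.measurableSet_biInter S fun i _ => ?_
    exact (measurableSet_wedge c₁ c₂).preimage (by fun_prop)
  calc _ ≤ threshMeasure m q μa μb
        {ω | ∀ i ∈ S, (ω (i, true), ω (i, false)) ∈ wedge c₁ c₂} :=
        measure_mono (Set.setOf_subset_setOf.mpr fun ω hω i hi =>
          mem_wedge_of_ne _ _ _ _ (hω i hi))
    _ ≤ _ := by
      rw [threshMeasure_eq, Measure.map_apply (measurable_regroup m) hmeas]
      have : regroup m ⁻¹' {ω | ∀ i ∈ S, (ω (i, true), ω (i, false)) ∈ wedge c₁ c₂} =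
          Set.univ.pi (fun i : Fin m => if i ∈ S then wedge c₁ c₂ else Set.univ) := by
        ext w
        simp only [regroup, Set.mem_pi, Set.mem_preimage, Set.mem_ofPred_eq, Set.mem_univ,
          true_implies]
        refine forall_congr' fun i => ?_
        by_cases hi : i ∈ S <;> simp [hi]
      rw [this, Measure.pi_pi, ← Finset.prod_const]
      rw [← Finset.prod_subset (Finset.subset_univ S)]
      · refine Finset.prod_le_prod' fun i hi => ?_
        rw [if_pos hi]
        exact wedge_le _ _ _ (hμa i) hv0 hv M hM hvM _ _ hc
      · intro i _ hi
        simp [hi]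

instance (m q : ℕ) (μa μb : Fin m → ℝ) : IsProbabilityMeasure (threshMeasure m q μa μb) := by
  unfold threshMeasure; infer_instance

lemma bad_le (m q : ℕ) (μa μb : Fin m → ℝ) (hμa : ∀ i, μa i ∈ Set.Icc (0 : ℝ) 1)
    (hm : 0 < m) (hlog : 7 ≤ Real.log m)
    (hv0 : (m : ℝ≥0) / (q : ℝ≥0) ≠ 0) (hv : (m : ℝ≥0) / (q : ℝ≥0) ≤ 1)
    (hvM : 1 ≤ (m : ℝ) ^ 2 * (((m : ℝ≥0) / (q : ℝ≥0) : ℝ≥0) : ℝ)) :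
    threshMeasure m q μa μb
      {ω | ∀ k : ℕ, 1 ≤ k → k + 1 ≤ m ^ 6 →
                ((Finset.univ.filter fun i : Fin m =>
                    xSign ((k : ℝ) / (m : ℝ) ^ 3) ω i ≠
                      xSign (((k : ℝ) + 1) / (m : ℝ) ^ 3) ω i).card : ℝ) ≤
                  Real.log m}ᶜ ≤ ENNReal.ofReal (1 / m) := by
  have hM : (0 : ℝ) < m := by exact_mod_cast hm
  calc _ ≤ threshMeasure m q μa μb (⋃ k ∈ Finset.range (m ^ 6),
        ⋃ S ∈ Finset.powersetCard 7 (Finset.univ : Finset (Fin m)),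
          {ω | ∀ i ∈ S, xSign ((k : ℝ) / (m : ℝ) ^ 3) ω i ≠
                      xSign (((k : ℝ) + 1) / (m : ℝ) ^ 3) ω i}) := by
        apply measure_mono
        intro ω hω
        simp only [Set.mem_compl_iff, Set.mem_ofPred_eq, not_forall, not_le] at hω
        obtain ⟨k, hk1, hk2, hk⟩ := hω
        have h7 : 7 ≤ (Finset.univ.filter fun i : Fin m =>
                    xSign ((k : ℝ) / (m : ℝ) ^ 3) ω i ≠
                      xSign (((k : ℝ) + 1) / (m : ℝ) ^ 3) ω i).card := by
          have : (7 : ℝ) ≤ ((Finset.univ.filter fun i : Fin m =>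
                    xSign ((k : ℝ) / (m : ℝ) ^ 3) ω i ≠
                      xSign (((k : ℝ) + 1) / (m : ℝ) ^ 3) ω i).card : ℝ) := hlog.trans hk.le
          exact_mod_cast this
        obtain ⟨S, hS, hcard⟩ := Finset.exists_subset_card_eq h7
        simp only [Set.mem_iUnion, Finset.mem_range, Finset.mem_powersetCard_univ]
        refine ⟨k, by omega, S, hcard, fun i hi => ?_⟩
        exact (Finset.mem_filter.mp (hS hi)).2
    _ ≤ ∑ k ∈ Finset.range (m ^ 6),
        ∑ S ∈ Finset.powersetCard 7 (Finset.univ : Finset (Fin m)),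
          ENNReal.ofReal (1 / (m : ℝ) ^ 2) ^ 7 := by
        refine (measure_biUnion_finset_le _ _).trans (Finset.sum_le_sum fun k _ => ?_)
        refine (measure_biUnion_finset_le _ _).trans (Finset.sum_le_sum fun S hS => ?_)
        rw [← (Finset.mem_powersetCard.mp hS).2]
        exact inter_le m q μa μb hμa hv0 hv m hM hvM _ _ (by ring) S
    _ = ENNReal.ofReal ((m : ℝ) ^ 6 * (m.choose 7 : ℝ) * (1 / (m : ℝ) ^ 2) ^ 7) := by
        simp only [Finset.sum_const, Finset.card_range, Finset.card_powersetCard,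
          Finset.card_univ, Fintype.card_fin, nsmul_eq_mul]
        rw [ENNReal.ofReal_mul (by positivity), ENNReal.ofReal_mul (by positivity),
          ENNReal.ofReal_pow (by positivity), ENNReal.ofReal_pow (by positivity),
          ENNReal.ofReal_natCast, ENNReal.ofReal_natCast]
        push_cast
        ring
    _ ≤ _ := by
        apply ENNReal.ofReal_le_ofReal
        have : (m.choose 7 : ℝ) ≤ (m : ℝ) ^ 7 := by exact_mod_cast Nat.choose_le_pow m 7
        calc _ ≤ (m : ℝ) ^ 6 * (m : ℝ) ^ 7 * (1 / (m : ℝ) ^ 2) ^ 7 := by gcongr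
          _ = _ := by field_simp

lemma N_le_s15 (m : ℕ) (D : ℝ) (hm : 21 ≤ m) (hlog : 7 ≤ Real.log m)
    (hD : (m : ℝ) ^ ((1 : ℝ) / 4) * Real.log m ^ 2 ≤ D) :
    15 * ((m : ℝ) ^ ((3 : ℝ) / 2) / D ^ 2) * Real.log m + Real.log m ^ 2 ≤ (m : ℝ) ^ 2 := by
  have hM : (21 : ℝ) ≤ m := by exact_mod_cast hm
  have hM0 : (0 : ℝ) < m := by linarith
  set L := Real.log m with hL
  have e1 : ((m : ℝ) ^ ((1 : ℝ) / 4)) ^ 2 = (m : ℝ) ^ ((1 : ℝ) / 2) := by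
    rw [← Real.rpow_natCast, ← Real.rpow_mul hM0.le]; norm_num
  have e2 : (m : ℝ) ^ ((3 : ℝ) / 2) = m * (m : ℝ) ^ ((1 : ℝ) / 2) := by
    rw [← Real.rpow_one_add' hM0.le (by norm_num)]; norm_num
  have hr : 0 < (m : ℝ) ^ ((1 : ℝ) / 2) := by positivity
  have hr4 : 0 < (m : ℝ) ^ ((1 : ℝ) / 4) := by positivity
  have hD2 : (m : ℝ) ^ ((1 : ℝ) / 2) * L ^ 4 ≤ D ^ 2 := by
    calc _ = ((m : ℝ) ^ ((1 : ℝ) / 4) * L ^ 2) ^ 2 := by rw [mul_pow, e1]; ring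
      _ ≤ _ := by gcongr
  have hL0 : 0 < L := by linarith
  have hD0 : 0 < D ^ 2 := lt_of_lt_of_le (by positivity) hD2
  have h1 : (m : ℝ) ^ ((3 : ℝ) / 2) / D ^ 2 * L ≤ m := by
    rw [div_mul_eq_mul_div, div_le_iff₀ hD0, e2]
    have hL4 : L ≤ L ^ 4 := le_self_pow₀ (by linarith) (by norm_num)
    calc (m : ℝ) * (m : ℝ) ^ ((1 : ℝ) / 2) * L
        ≤ m * ((m : ℝ) ^ ((1 : ℝ) / 2) * L ^ 4) := by rw [mul_assoc]; gcongr
      _ ≤ _ := by gcongr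
  have h2 : L ^ 2 ≤ 4 * m := by
    have : L ≤ 2 * √m := by
      have := Real.log_le_self (Real.sqrt_nonneg (m : ℝ))
      rw [Real.log_sqrt hM0.le] at this
      linarith
    calc L ^ 2 ≤ (2 * √m) ^ 2 := by gcongr
      _ = _ := by rw [mul_pow, Real.sq_sqrt hM0.le]; norm_num
  nlinarith

/-- in the thresholding allocation model with
`q(m) = m ⌈15 (m^{3/2}/Δ(m)²) log m + (log m)²⌉`, the probability that every pair of
consecutive grid points `c₁ = k/m³`, `c₂ = (k+1)/m³` has at most `log m` items `i` with
`x_i(c₁) ≠ x_i(c₂)` tends to `1`. -/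
theorem stmt15 (Δ : ℕ → ℝ)
    (hΔ1 : ∀ᶠ m : ℕ in atTop, (m : ℝ) ^ ((1 : ℝ) / 4) * Real.log m ^ 2 ≤ Δ m)
    (hΔ2 : Tendsto (fun m : ℕ => Δ m * Real.log m / m) atTop (nhds 0))
    (q : ℕ → ℕ)
    (hq : ∀ m : ℕ,
      q m = m * ⌈15 * ((m : ℝ) ^ ((3 : ℝ) / 2) / Δ m ^ 2) * Real.log m + Real.log m ^ 2⌉₊)
    (μa μb : (m : ℕ) → Fin m → ℝ)
    (hμa : ∀ m i, μa m i ∈ Set.Icc (0 : ℝ) 1) (hμb : ∀ m i, μb m i ∈ Set.Icc (0 : ℝ) 1) :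
    Tendsto (fun m : ℕ =>
        (threshMeasure m (q m) (μa m) (μb m)
            {ω | ∀ k : ℕ, 1 ≤ k → k + 1 ≤ m ^ 6 →
                ((Finset.univ.filter fun i : Fin m =>
                    xSign ((k : ℝ) / (m : ℝ) ^ 3) ω i ≠
                      xSign (((k : ℝ) + 1) / (m : ℝ) ^ 3) ω i).card : ℝ) ≤
                  Real.log m}).toReal)
      atTop (nhds 1) := by
  have hlogT : Tendsto (fun m : ℕ => Real.log m) atTop atTop :=
    Real.tendsto_log_atTop.comp tendsto_natCast_atTop_atTop
  have hlim : Tendsto (fun m : ℕ => 1 - 1 / (m : ℝ)) atTop (nhds 1) := by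
    simpa using (tendsto_const_nhds (x := (1 : ℝ))).sub tendsto_one_div_atTop_nhds_zero_nat
  refine tendsto_of_tendsto_of_tendsto_of_le_of_le' hlim tendsto_const_nhds ?_ ?_
  · filter_upwards [hΔ1, hlogT.eventually_ge_atTop 7, eventually_ge_atTop 21] with m hD hlog hm
    have hm0 : 0 < m := by omega
    have hM0 : (0 : ℝ) < m := by exact_mod_cast hm0
    have hN := N_le_s15 m (Δ m) hm hlog hD
    have hqm := hq m
    have hX : 0 < 15 * ((m : ℝ) ^ ((3 : ℝ) / 2) / Δ m ^ 2) * Real.log m + Real.log m ^ 2 := by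
      have : 0 ≤ 15 * ((m : ℝ) ^ ((3 : ℝ) / 2) / Δ m ^ 2) * Real.log m := by positivity
      have : 0 < Real.log m ^ 2 := by positivity
      linarith
    set N := ⌈15 * ((m : ℝ) ^ ((3 : ℝ) / 2) / Δ m ^ 2) * Real.log m + Real.log m ^ 2⌉₊ with hNdef
    have hN0 : 0 < N := Nat.ceil_pos.mpr hX
    have hN2 : N ≤ m ^ 2 := by
      apply Nat.ceil_le.mpr; push_cast; exact hN
    have hv : (m : ℝ≥0) / (q m : ℝ≥0) = (N : ℝ≥0)⁻¹ := by
      rw [hqm]; push_cast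
      have : (m : ℝ≥0) ≠ 0 := by exact_mod_cast hm0.ne'
      have : (N : ℝ≥0) ≠ 0 := by exact_mod_cast hN0.ne'
      field_simp
    have hb := bad_le m (q m) (μa m) (μb m) (hμa m) hm0 hlog
      (by rw [hv]; have : (N : ℝ≥0) ≠ 0 := by exact_mod_cast hN0.ne'
          exact inv_ne_zero this)
      (by rw [hv]; apply inv_le_one_of_one_le₀; exact_mod_cast hN0)
      (by rw [hv]; push_cast
          have : (0 : ℝ) < N := by exact_mod_cast hN0
          rw [← div_eq_mul_inv, le_div_iff₀ this, one_mul]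
          exact_mod_cast hN2)
    generalize {ω : (Fin m × Bool) → ℝ | ∀ k : ℕ, 1 ≤ k → k + 1 ≤ m ^ 6 →
                ((Finset.univ.filter fun i : Fin m =>
                    xSign ((k : ℝ) / (m : ℝ) ^ 3) ω i ≠
                      xSign (((k : ℝ) + 1) / (m : ℝ) ^ 3) ω i).card : ℝ) ≤
                  Real.log m} = A at hb ⊢
    have h1 : 1 ≤ threshMeasure m (q m) (μa m) (μb m) A +
        threshMeasure m (q m) (μa m) (μb m) Aᶜ := by
      rw [← measure_univ (μ := threshMeasure m (q m) (μa m) (μb m)), ← Set.union_compl_self A]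
      exact measure_union_le _ _
    have h2 := ENNReal.toReal_mono (by finiteness) h1
    rw [ENNReal.toReal_add (by finiteness) (by finiteness), ENNReal.toReal_one] at h2
    have h3 := ENNReal.toReal_mono (by finiteness) hb
    rw [ENNReal.toReal_ofReal (by positivity)] at h3
    linarith
  · refine Eventually.of_forall fun m => ?_
    exact ENNReal.toReal_le_of_le_ofReal zero_le_one (by simpa using prob_le_one)
end
end
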